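/- arXiv:2102.08195 — 13 statements merged into one kernel-verified Lean document; each statement's English description precedes it below -/
import Mathlib

section
/- Let X be a nonempty set, Y a real vector space, D : Y → Set Y a domination structure, f : X → Y, and x̄ ∈ X. Assume the pointedness condition: D(f(x)) ∩ (−D(f(x̄))) = {0} for every x ∈ X. If x̄ is a conventional nondominated solution of f, i.e., for every x ∈ X, f(x) ≤_N f(x̄) implies f(x̄) ≤_N f(x), then x̄ is a D-nondominated solution of f, i.e., for every x ∈ X with f(x) ≠ f(x̄) one has ¬(f(x) ≤_N f(x̄)). -/
/-- Under the pointedness condition `D(f x) ∩ (−D(f x̄)) = {0}` for all `x`,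
a conventional nondominated solution is a `D`-nondominated solution.
The nondomination relation is `v ≤_N y ⟺ y ∈ v + D v ⟺ y - v ∈ D v`. -/
theorem conventional_nondominated_imp_nondominated
    {X Y : Type*} [Nonempty X] [AddCommGroup Y] [Module ℝ Y]
    (D : Y → Set Y) (f : X → Y) (xbar : X)
    (hpointed : ∀ x : X, D (f x) ∩ (-(D (f xbar))) = {0})
    (h : ∀ x : X, f xbar - f x ∈ D (f x) → f x - f xbar ∈ D (f xbar)) :
    ∀ x : X, f x ≠ f xbar → f xbar - f x ∉ D (f x) := by
  intro x hne hx
  have hm : f xbar - f x ∈ D (f x) ∩ (-(D (f xbar))) := by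
    refine ⟨hx, ?_⟩
    simpa using h x hx
  rw [hpointed x, Set.mem_singleton_iff, sub_eq_zero] at hm
  exact hne hm.symm
end

section
/- Let X be a nonempty set, Y a real vector space, D : Y → Set Y a domination structure, f : X → Y, and x̄ ∈ X. Assume the pointedness condition: D(f(x)) ∩ (−D(f(x̄))) = {0} for every x ∈ X. If x̄ is a conventional efficient solution of f, i.e., for every x ∈ X, f(x) ≤_E f(x̄) implies f(x̄) ≤_E f(x), then x̄ is a D-efficient solution of f, i.e., for every x ∈ X with f(x) ≠ f(x̄) one has ¬(f(x) ≤_E f(x̄)). -/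
/-- Under the pointedness condition `D(f x) ∩ (−D(f x̄)) = {0}` for all `x`,
a conventional efficient solution is a `D`-efficient solution.
The efficiency relation is `v ≤_E y ⟺ v ∈ y - D y ⟺ y - v ∈ D y`. -/
theorem conventional_efficient_imp_efficient
    {X Y : Type*} [Nonempty X] [AddCommGroup Y] [Module ℝ Y]
    (D : Y → Set Y) (f : X → Y) (xbar : X)
    (hpointed : ∀ x : X, D (f x) ∩ (-(D (f xbar))) = {0})
    (h : ∀ x : X, f xbar - f x ∈ D (f xbar) → f x - f xbar ∈ D (f x)) :
    ∀ x : X, f x ≠ f xbar → f xbar - f x ∉ D (f xbar) := by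
  intro x hne hx
  have hmem : f x - f xbar ∈ D (f x) ∩ (-(D (f xbar))) :=
    ⟨h x hx, by simpa using hx⟩
  rw [hpointed x] at hmem
  exact hne (sub_eq_zero.mp hmem)
end

section
/- Let Y be a real vector space, k ∈ Y ∖ {0}, and A ⊆ Y. The Gerstewitz scalarization function φ_{A,k}(y) := inf{t ∈ ℝ : y ∈ t•k − A} (with values in ℝ ∪ {±∞} and inf ∅ = +∞) satisfies: (a) translation invariance along k: φ_{A,k}(y + t•k) = t + φ_{A,k}(y) for all y ∈ Y and t ∈ ℝ; (b) if B ⊆ Y satisfies A + B ⊆ A, then φ_{A,k} is B-monotone, i.e., a ∈ b − B implies φ_{A,k}(a) ≤ φ_{A,k}(b); (c) with B := A + {t•k : t ≥ 0}, one has φ_{vcl_k(B),k} = φ_{B,k} = φ_{A,k} as functions on Y. -/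
/-!
Write `T_A(y) = {t | t • k - y ∈ A}`, so that `φ_{A,k}(y) = inf T_A(y)`. Translating `y` by `t • k`
translates `T_A(y)` by `t`, which gives (a). The inequalities in (b) and (c) all follow from one
comparison principle, `gerstewitz_le_of_approx`: if every element `t` of `T_B(b)` is matched, for
each `ε > 0`, by an element of `T_A(a)` that is at most `t + ε`, then `inf T_A(a) ≤ inf T_B(b)`. The
slack `ε` is needed only to pass from `vcl_k(B)` back to `B`; in the other cases there is a match `≤ t`.
-/

open Pointwise

/-- The Gerstewitz nonlinear scalarization function
`φ_{A,k}(y) := inf {t ∈ ℝ | y ∈ t•k − A}`, with values in `EReal` and `inf ∅ = +∞`.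
Note that `y ∈ t•k − A ↔ t•k − y ∈ A`. -/
noncomputable def gerstewitz {Y : Type*} [AddCommGroup Y] [Module ℝ Y]
    (A : Set Y) (k : Y) (y : Y) : EReal :=
  sInf (((↑) : ℝ → EReal) '' {t : ℝ | t • k - y ∈ A})

/-- The vectorial closure of `A` in the direction `k`. -/
def vclDir {Y : Type*} [AddCommGroup Y] [Module ℝ Y] (A : Set Y) (k : Y) : Set Y :=
  {y : Y | ∀ l : ℝ, 0 < l → ∃ t ∈ Set.Icc (0 : ℝ) l, y + t • k ∈ A}

theorem gerstewitz_le_of_approx {Y : Type*} [AddCommGroup Y] [Module ℝ Y]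
    {A B : Set Y} {k a b : Y}
    (h : ∀ t : ℝ, t • k - b ∈ B → ∀ ε : ℝ, 0 < ε → ∃ s : ℝ, s ≤ t + ε ∧ s • k - a ∈ A) :
    gerstewitz A k a ≤ gerstewitz B k b := by
  refine le_sInf ?_
  rintro _ ⟨t, ht, rfl⟩
  refine EReal.le_of_forall_lt_iff_le.1 fun z hz => ?_
  obtain ⟨s, hs, hsA⟩ := h t ht (z - t) (sub_pos.2 (EReal.coe_lt_coe_iff.1 hz))
  have hsle : gerstewitz A k a ≤ (s : EReal) := sInf_le ⟨s, hsA, rfl⟩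
  exact hsle.trans (EReal.coe_le_coe_iff.2 (by linarith))

/-- One half of translation invariance; the other half is this inequality for the translation by
`-t`. -/
theorem add_gerstewitz_le {Y : Type*} [AddCommGroup Y] [Module ℝ Y]
    (A : Set Y) (k y : Y) (t : ℝ) :
    (t : EReal) + gerstewitz A k y ≤ gerstewitz A k (y + t • k) := by
  refine le_sInf ?_
  rintro _ ⟨s, hs, rfl⟩
  have hmem : (s - t) • k - y ∈ A := by
    have e : (s - t) • k - y = s • k - (y + t • k) := by module
    rw [e]
    exact hs
  have h1 : gerstewitz A k y ≤ ((s - t : ℝ) : EReal) := sInf_le ⟨s - t, hmem, rfl⟩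
  calc (t : EReal) + gerstewitz A k y ≤ (t : EReal) + ((s - t : ℝ) : EReal) := by gcongr
    _ = (s : EReal) := by
      rw [← EReal.coe_add]
      congr 1
      ring

/-- properties of the Gerstewitz scalarization function:
(a) translation invariance along `k`; (b) `B`-monotonicity when `A + B ⊆ A`;
(c) with `B := A + cone(k)`, the functions `φ_{vcl_k(B),k}`, `φ_{B,k}` and `φ_{A,k}`
coincide on `Y`. -/
theorem gerstewitz_properties {Y : Type*} [AddCommGroup Y] [Module ℝ Y]
    (k : Y) (hk : k ≠ 0) (A : Set Y) :
    (∀ (y : Y) (t : ℝ),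
        gerstewitz A k (y + t • k) = (t : EReal) + gerstewitz A k y) ∧
    (∀ B : Set Y, A + B ⊆ A →
        ∀ a b : Y, b - a ∈ B → gerstewitz A k a ≤ gerstewitz A k b) ∧
    (∀ y : Y,
        gerstewitz (vclDir (A + {z : Y | ∃ t : ℝ, 0 ≤ t ∧ z = t • k}) k) k y
          = gerstewitz (A + {z : Y | ∃ t : ℝ, 0 ≤ t ∧ z = t • k}) k y ∧
        gerstewitz (A + {z : Y | ∃ t : ℝ, 0 ≤ t ∧ z = t • k}) k y
          = gerstewitz A k y) := by
  refine ⟨fun y t => le_antisymm ?_ (add_gerstewitz_le A k y t), ?_, fun y => ⟨?_, ?_⟩⟩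
  · have h := add_gerstewitz_le A k (y + t • k) (-t)
    have e : y + t • k + (-t) • k = y := by module
    rw [e] at h
    calc gerstewitz A k (y + t • k)
        = (t : EReal) + (((-t : ℝ) : EReal) + gerstewitz A k (y + t • k)) := by
          rw [← add_assoc, ← EReal.coe_add, add_neg_cancel, EReal.coe_zero, zero_add]
      _ ≤ (t : EReal) + gerstewitz A k y := by gcongr
  · intro B hB a b hab
    refine gerstewitz_le_of_approx fun t ht ε hε => ⟨t, by linarith, ?_⟩
    have e : t • k - a = (t • k - b) + (b - a) := by module
    rw [e]
    exact hB (Set.add_mem_add ht hab)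
  · refine le_antisymm (gerstewitz_le_of_approx fun t ht ε hε => ⟨t, by linarith, ?_⟩)
      (gerstewitz_le_of_approx fun t ht ε hε => ?_)
    · exact fun l hl => ⟨0, ⟨le_rfl, hl.le⟩, by simpa using ht⟩
    · obtain ⟨r, ⟨-, hr⟩, hmem⟩ := ht ε hε
      refine ⟨t + r, by linarith, ?_⟩
      have e : (t + r) • k - y = t • k - y + r • k := by module
      rw [e]
      exact hmem
  · refine le_antisymm (gerstewitz_le_of_approx fun t ht ε hε => ⟨t, by linarith, ?_⟩)
      (gerstewitz_le_of_approx fun t ht ε hε => ?_)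
    · have e : t • k - y = (t • k - y) + (0 : ℝ) • k := by module
      rw [e]
      exact Set.add_mem_add ht ⟨0, le_rfl, rfl⟩
    · obtain ⟨x, hx, _, ⟨r, hr, rfl⟩, hxr⟩ := Set.mem_add.1 ht
      refine ⟨t - r, by linarith, ?_⟩
      have e : (t - r) • k - y = x := by
        rw [sub_smul, sub_right_comm, ← hxr, add_sub_cancel_right]
      rw [e]
      exact hx
end

section
/- Let (X,d) be a complete metric space, Y a real Banach space, D : Y → Set Y, f : X → Y, ε > 0, and let x_ε ∈ X be an εk-efficient solution of f with respect to D, where k ∈ D(f(x_ε)) ∖ {0}; write y_ε := f(x_ε). Assume: (C1) there is a bounded set M ⊆ Y with f(x) ∈ M + D(y_ε) for all x ∈ X; (C2) for every y ∈ Y the set {x ∈ X : f(x) ∈ y − D(y_ε)} is closed in X; (C3-a) D(y_ε) is a proper (≠ Y), closed, convex, pointed cone; (C3-b) D(f(x)) ⊆ D(y_ε) for every x ∈ X with d(x_ε,x) ≤ √ε. Then there exists x̄ ∈ X such that: (i) f(x_ε) − f(x̄) ∈ D(y_ε), and x̄ is an εk-efficient solution of f with respect to D; (ii) d(x_ε,x̄)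 ≤ √ε; (iii) for every x ∈ X with x ≠ x̄, f(x̄) − f(x) − √ε·d(x̄,x)•k ∉ D(f(x̄)) ∖ {0}. -/
/-!
The proof scalarizes and then runs Ekeland's iteration. Write `K = D (f xeps)` and consider the
relation `x ⟶ z` given by `f x - f z - (√ε * dist x z) • k ∈ K`. It is a preorder because `K` is a
convex cone containing `k`, and its sections `{z | x ⟶ z}` are closed: (C2) gives closedness with the
distance relaxed by any `δ > 0`, and `K` being closed allows `δ → 0`. Since `K` is closed, convex and
pointed, `-k ∉ K`, and Hahn–Banach yields a continuous linear functional `g ≥ 0` on `K` with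
`g k > 0`. By (C1), `g ∘ f` is bounded below, and `x ⟶ z` forces
`√ε * g k * dist x z ≤ g (f x) - g (f z)`; no interior of `K` is needed. Hence
`exists_minimal_of_dist_le` provides `xbar` with `xeps ⟶ xbar` that is minimal for `⟶`.
The distance estimate and the approximate efficiency of `xbar` follow from the approximate efficiency
of `xeps` since, `K` being pointed, `K + (K \ {0}) ⊆ K \ {0}`; minimality and (C3-b) give the
variational inequality.
-/

open Pointwise

/-- The order-theoretic core of Ekeland's principle: a preorder on a complete metric space with closed
sections, along which a function bounded below decreases at least proportionally to the distance,
has a minimal element below any given point. -/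
theorem exists_minimal_of_dist_le {X : Type*} [MetricSpace X] [CompleteSpace X]
    (R : X → X → Prop) (hrefl : ∀ x, R x x) (htrans : ∀ x y z, R x y → R y z → R x z)
    (hclosed : ∀ x, IsClosed {z | R x z}) (φ : X → ℝ) (m : ℝ) (hm : ∀ x, m ≤ φ x)
    (c : ℝ) (hc : 0 < c) (hR : ∀ x z, R x z → c * dist x z ≤ φ x - φ z) (x0 : X) :
    ∃ xbar, R x0 xbar ∧ ∀ y, R xbar y → y = xbar := by
  have step : ∀ (n : ℕ) (x : X), ∃ z, R x z ∧ ∀ y, R x y → φ z ≤ φ y + (1 / 2 : ℝ) ^ n := by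
    intro n x
    have hne : (φ '' {z | R x z}).Nonempty := ⟨φ x, x, hrefl x, rfl⟩
    have hbdd : BddBelow (φ '' {z | R x z}) := ⟨m, by rintro _ ⟨z, -, rfl⟩; exact hm z⟩
    have hpos : (0 : ℝ) < (1 / 2) ^ n := by positivity
    obtain ⟨_, ⟨z, hz, rfl⟩, hlt⟩ := exists_lt_of_csInf_lt hne (lt_add_of_pos_right _ hpos)
    refine ⟨z, hz, fun y hy => ?_⟩
    have := csInf_le hbdd ⟨y, hy, rfl⟩
    linarith
  choose next hnext hmin using step
  let u : ℕ → X := fun n => Nat.rec x0 next n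
  have hu : ∀ n, R (u n) (u (n + 1)) := fun n => hnext n (u n)
  have hmono : ∀ n j, R (u n) (u (n + j)) := by
    intro n j
    induction j with
    | zero => exact hrefl _
    | succ j ih => exact htrans _ _ _ ih (hu (n + j))
  -- Near-minimality at stage `n` makes the section at `u (n + 1)` small.
  have hsmall : ∀ n y, R (u (n + 1)) y → dist (u (n + 1)) y ≤ 1 / c * (1 / 2 : ℝ) ^ n := by
    intro n y hy
    have h1 := hR _ _ hy
    have h2 : φ (u (n + 1)) ≤ φ y + (1 / 2 : ℝ) ^ n := hmin n (u n) y (htrans _ _ _ (hu n) hy)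
    rw [div_mul_eq_mul_div, one_mul, le_div_iff₀ hc]
    linarith
  have hcau : CauchySeq fun n => u (n + 1) :=
    cauchySeq_of_le_geometric (1 / 2) (1 / c) (by norm_num) fun n => hsmall n _ (hu (n + 1))
  obtain ⟨a, ha⟩ := cauchySeq_tendsto_of_complete hcau
  have hRa : ∀ n, R (u n) a := by
    intro n
    refine (hclosed (u n)).mem_of_tendsto ha ?_
    filter_upwards [Filter.eventually_ge_atTop n] with j hj
    obtain ⟨i, rfl⟩ := Nat.exists_eq_add_of_le hj
    exact hmono n (i + 1)
  refine ⟨a, hRa 0, fun y hy => ?_⟩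
  have hlim : Filter.Tendsto (fun n : ℕ => 1 / c * (1 / 2 : ℝ) ^ n) Filter.atTop (nhds 0) := by
    simpa using (tendsto_pow_atTop_nhds_zero_of_lt_one (by norm_num : (0 : ℝ) ≤ 1 / 2)
      (by norm_num)).const_mul (1 / c)
  have hy' : Filter.Tendsto (fun n => u (n + 1)) Filter.atTop (nhds y) :=
    tendsto_iff_dist_tendsto_zero.2 <| squeeze_zero (fun _ => dist_nonneg)
      (fun n => hsmall n y (htrans _ _ _ (hRa (n + 1)) hy)) hlim
  exact tendsto_nhds_unique hy' ha

/-- A point outside a closed convex cone is separated from it by a functional which is nonnegative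
on the cone. -/
theorem exists_nonneg_functional {Y : Type*} [NormedAddCommGroup Y] [NormedSpace ℝ Y]
    {K : Set Y} (hcl : IsClosed K) (hcv : Convex ℝ K)
    (hcone : ∀ v ∈ K, ∀ t : ℝ, 0 ≤ t → t • v ∈ K) (h0 : (0 : Y) ∈ K) {p : Y} (hp : p ∉ K) :
    ∃ g : Y →L[ℝ] ℝ, (∀ v ∈ K, 0 ≤ g v) ∧ g p < 0 := by
  obtain ⟨g, a, hga, hgK⟩ := geometric_hahn_banach_point_closed hcv hcl hp
  have ha : a < 0 := by simpa using hgK 0 h0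
  refine ⟨g, fun v hv => ?_, hga.trans ha⟩
  by_contra! hneg
  -- The multiple of `v` on which `g` takes exactly the separating value `a`.
  have := hgK _ (hcone v hv (a / g v) (div_nonneg_of_nonpos ha.le hneg.le))
  rw [map_smul, smul_eq_mul, div_mul_cancel₀ _ hneg.ne] at this
  exact lt_irrefl _ this

/-- Ekeland-type variational principle with nonsolid domination sets
(Theorem `t-nonsolid`).  `x_ε` is an `εk`-efficient solution of `f` w.r.t. `D`, i.e.
`f x ∉ f x_ε − ε•k − (D (f x_ε) \ {0})` for all `x`. -/
theorem EVP_nonsolid_domination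
    {X Y : Type*} [MetricSpace X] [CompleteSpace X]
    [NormedAddCommGroup Y] [NormedSpace ℝ Y] [CompleteSpace Y]
    (D : Y → Set Y) (f : X → Y) (ε : ℝ) (hε : 0 < ε)
    (k : Y) (xeps : X) (hk : k ∈ D (f xeps) \ {0})
    (hxeps : ∀ x : X, f xeps - ε • k - f x ∉ D (f xeps) \ {0})
    -- (C1) quasiboundedness
    (hC1 : ∃ M : Set Y, Bornology.IsBounded M ∧ ∀ x : X, f x ∈ M + D (f xeps))
    -- (C2) lower continuity
    (hC2 : ∀ y : Y, IsClosed {x : X | y - f x ∈ D (f xeps)})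
    -- (C3-a): D (f xeps) is a proper, closed, convex, pointed cone
    (hC3a1 : D (f xeps) ≠ Set.univ)
    (hC3a2 : IsClosed (D (f xeps)))
    (hC3a3 : Convex ℝ (D (f xeps)))
    (hC3a4 : ∀ v ∈ D (f xeps), ∀ t : ℝ, 0 ≤ t → t • v ∈ D (f xeps))
    (hC3a5 : D (f xeps) ∩ (-(D (f xeps))) = {0})
    -- (C3-b)
    (hC3b : ∀ x : X, dist xeps x ≤ Real.sqrt ε → D (f x) ⊆ D (f xeps)) :
    ∃ xbar : X,
      (f xeps - f xbar ∈ D (f xeps) ∧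
        ∀ x : X, f xbar - ε • k - f x ∉ D (f xbar) \ {0}) ∧
      dist xeps xbar ≤ Real.sqrt ε ∧
      (∀ x : X, x ≠ xbar →
        f xbar - f x - (Real.sqrt ε * dist xbar x) • k ∉ D (f xbar) \ {0}) := by
  set K := D (f xeps) with hK
  obtain ⟨hkK, hk0⟩ := hk
  have hk0 : k ≠ 0 := hk0
  have h0 : (0 : Y) ∈ K := by simpa using hC3a4 k hkK 0 le_rfl
  have hpt : ∀ v, v ∈ K → -v ∈ K → v = 0 := by
    intro v h1 h2
    have : v ∈ K ∩ -K := ⟨h1, h2⟩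
    rw [hC3a5] at this
    exact this
  have hadd : ∀ v ∈ K, ∀ w ∈ K, v + w ∈ K := by
    intro v hv w hw
    have h := hC3a4 _ (hC3a3 hv hw (by norm_num : (0 : ℝ) ≤ 1 / 2)
      (by norm_num : (0 : ℝ) ≤ 1 / 2) (by norm_num)) 2 (by norm_num)
    convert h using 1
    module
  have hadd0 : ∀ v ∈ K, ∀ w ∈ K, w ≠ 0 → v + w ∈ K \ {0} := by
    intro v hv w hw hw0
    refine ⟨hadd v hv w hw, fun h => hw0 (hpt w hw ?_)⟩
    rwa [← eq_neg_of_add_eq_zero_left h]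
  have hs : 0 < √ε := Real.sqrt_pos.2 hε
  have hss : √ε * √ε = ε := Real.mul_self_sqrt hε.le
  obtain ⟨g, hgK, hgk⟩ := exists_nonneg_functional hC3a2 hC3a3 hC3a4 h0
    (fun h => hk0 (hpt k hkK h))
  have hgk : 0 < g k := by simpa using hgk
  obtain ⟨M, hM, hfM⟩ := hC1
  obtain ⟨r, hr⟩ := hM.exists_norm_le
  obtain ⟨xbar, hbar, hbarmin⟩ := exists_minimal_of_dist_le
    (fun x z => f x - f z - (√ε * dist x z) • k ∈ K) (fun x => by simpa using h0)
    (by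
      intro x y z hxy hyz
      have h := hadd _ (hadd _ hxy _ hyz) _ (hC3a4 k hkK
        (√ε * (dist x y + dist y z - dist x z))
        (mul_nonneg hs.le (sub_nonneg.2 (dist_triangle x y z))))
      convert h using 1
      module)
    (by
      intro x
      -- The section is the intersection over `δ` of the sections with distance relaxed by `δ`.
      refine isClosed_of_closure_subset fun z hz => ?_
      have hrel : ∀ δ : ℝ, 0 < δ → f x - f z - (√ε * (dist x z - δ)) • k ∈ K := by
        intro δ hδ
        have hcl := hC2 (f x - (√ε * (dist x z - δ)) • k)
        have hev : ∀ᶠ w in nhds z, dist x z - δ < dist x w :=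
          (continuous_const.dist continuous_id).continuousAt.eventually
            (lt_mem_nhds (by simpa using hδ))
        have hz' : z ∈ {w | f x - (√ε * (dist x z - δ)) • k - f w ∈ K} := by
          refine hcl.mem_of_frequently_of_tendsto
            (((mem_closure_iff_frequently.1 hz).and_eventually hev).mono ?_)
            Filter.tendsto_id
          rintro w ⟨hw, hdw⟩
          have h := hadd _ hw _ (hC3a4 k hkK (√ε * (dist x w - (dist x z - δ)))
            (mul_nonneg hs.le (by linarith)))
          show f x - (√ε * (dist x z - δ)) • k - f w ∈ K
          convert h using 1
          module
        have hz'' : f x - (√ε * (dist x z - δ)) • k - f z ∈ K := hz'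
        convert hz'' using 1
        module
      have hcont : Continuous fun δ : ℝ => f x - f z - (√ε * (dist x z - δ)) • k := by fun_prop
      have hlim := (hcont.tendsto 0).mono_left (nhdsWithin_le_nhds (s := Set.Ioi (0 : ℝ)))
      have := hC3a2.mem_of_tendsto hlim (eventually_mem_nhdsWithin.mono hrel)
      simpa using this)
    (fun x => g (f x)) (-(‖g‖ * r))
    (by
      intro x
      obtain ⟨a, ha, v, hv, hav⟩ := Set.mem_add.1 (hfM x)
      have h1 : |g a| ≤ ‖g‖ * r :=
        (g.le_opNorm a).trans (mul_le_mul_of_nonneg_left (hr a ha) (norm_nonneg g))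
      have h2 := hgK v hv
      have h3 := neg_abs_le (g a)
      show _ ≤ g (f x)
      rw [← hav, map_add]
      linarith)
    (√ε * g k) (mul_pos hs hgk)
    (by
      intro x z h
      have := hgK _ h
      simp only [map_sub, map_smul, smul_eq_mul] at this
      linarith)
    xeps
  have hle : f xeps - f xbar ∈ K := by
    have h := hadd _ hbar _ (hC3a4 k hkK (√ε * dist xeps xbar) (by positivity))
    simpa using h
  have hdist : dist xeps xbar ≤ √ε := by
    by_contra! hlt
    have hpos : 0 < √ε * dist xeps xbar - ε := by nlinarith
    have h := hadd0 _ hbar _ (hC3a4 k hkK _ hpos.le) (smul_ne_zero hpos.ne' hk0)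
    refine hxeps xbar ?_
    convert h using 1
    module
  have hsub := hC3b xbar hdist
  refine ⟨xbar, ⟨hle, fun x hx => hxeps x ?_⟩, hdist, fun x hx h => hx (hbarmin x (hsub h.1))⟩
  have h := hadd0 _ hle _ (hsub hx.1) hx.2
  convert h using 1
  module
end

section
/- Under hypotheses (E1), (E2), (E3), there exists x⋆ ∈ W(x₀) such that q(x⋆,u) = 0 for every u ∈ W(x⋆). -/
/-!
Put `Θ = D (f x₀)` and let `g x = sup {s | f x₀ - f x - s • k ∈ Θ}`, which is `-ψ x`
for `x ∈ W x₀`. Since `Θ` is closed under addition and under adding nonnegative multiples of `k`, the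
relation `u ∈ W x` is transitive, and on `W x₀` the membership `u ∈ W x` forces
`√ε * q x u ≤ g u - g x` (`image_gap`, read off from the sets defining `g`); by (E1), `g` is bounded
above on `W x₀`. So the theorem is an instance of a Brezis–Browder ordering principle
(`exists_maximal_of_gap`): move from `xₙ` to a point `xₙ₊₁ ∈ W xₙ` that almost maximizes `g` over
`W xₙ`. The steps `q xₙ xₙ₊₁` are summable by telescoping, so (E2) gives a point `x⋆` in every
`W xₙ`, and for `u ∈ W x⋆` the choice of `xₙ₊₁` yields `g u ≤ g x⋆`, hence `q x⋆ u = 0`. Estimating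
`q x⋆ u` through `g`, and not through `q xₙ u`, is what makes symmetry of `q` unnecessary.
-/

open Filter Topology

/-- A Brezis–Browder principle: for a preorder `u ∈ W x` along which a functional `g`, bounded
above on `W x0`, increases by at least `c * q x u`, if summable chains have a common successor then some
successor of `x0` has only successors at distance zero. -/
lemma exists_maximal_of_gap {X : Type*} (q : X → X → ℝ) (hq : ∀ x y, 0 ≤ q x y)
    (W : X → Set X) (hrefl : ∀ x, x ∈ W x)
    (htrans : ∀ x y z, y ∈ W x → z ∈ W y → z ∈ W x) (x0 : X)
    (g : X → ℝ) (B : ℝ) (hB : ∀ x ∈ W x0, g x ≤ B) (c : ℝ) (hc : 0 < c)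
    (hgap : ∀ x ∈ W x0, ∀ u ∈ W x, c * q x u ≤ g u - g x)
    (hlim : ∀ xs : ℕ → X, (∀ n : ℕ, xs (n + 1) ∈ W (xs n)) →
      (Summable fun n : ℕ => q (xs n) (xs (n + 1))) →
      ∃ xstar : X, ∀ n : ℕ, xstar ∈ W (xs n)) :
    ∃ xstar ∈ W x0, ∀ u ∈ W xstar, q xstar u = 0 := by
  have hstep : ∀ (n : ℕ) (x : X), ∃ y ∈ W x, x ∈ W x0 →
      ∀ v ∈ W x, g v ≤ g y + 1 / ((n : ℝ) + 1) := by
    intro n x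
    by_cases hx : x ∈ W x0
    · have hbdd : BddAbove (g '' W x) := by
        refine ⟨B, ?_⟩
        rintro _ ⟨v, hv, rfl⟩
        exact hB v (htrans _ _ _ hx hv)
      have hpos : 0 < 1 / ((n : ℝ) + 1) := Nat.one_div_pos_of_nat
      obtain ⟨_, ⟨y, hy, rfl⟩, hlt⟩ := exists_lt_of_lt_csSup
        (Set.Nonempty.image g ⟨x, hrefl x⟩) (sub_lt_self (sSup (g '' W x)) hpos)
      refine ⟨y, hy, fun _ v hv => ?_⟩
      have := le_csSup hbdd (Set.mem_image_of_mem g hv)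
      linarith
    · exact ⟨x, hrefl x, fun h => absurd h hx⟩
  choose next hnext hnear using hstep
  let xs : ℕ → X := fun n => Nat.rec x0 (fun m x => next m x) n
  have hsucc : ∀ n, xs (n + 1) = next n (xs n) := fun _ => rfl
  have hchain : ∀ n, xs (n + 1) ∈ W (xs n) := fun n => hnext n (xs n)
  have hmem : ∀ n, xs n ∈ W x0 := by
    intro n
    induction n with
    | zero => exact hrefl x0
    | succ n ih => exact htrans _ _ _ ih (hchain n)
  have htele : ∀ n, c * ∑ i ∈ Finset.range n, q (xs i) (xs (i + 1)) ≤ g (xs n) - g x0 := by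
    intro n
    rw [Finset.mul_sum]
    calc _ ≤ ∑ i ∈ Finset.range n, (g (xs (i + 1)) - g (xs i)) :=
          Finset.sum_le_sum fun i _ => hgap _ (hmem i) _ (hchain i)
      _ = g (xs n) - g x0 := Finset.sum_range_sub (fun i => g (xs i)) n
  have hsum : Summable fun n : ℕ => q (xs n) (xs (n + 1)) := by
    refine summable_of_sum_range_le (c := (B - g x0) / c) (fun _ => hq _ _) fun n => ?_
    rw [le_div_iff₀' hc]
    linarith [htele n, hB _ (hmem n)]
  obtain ⟨xstar, hstar⟩ := hlim xs hchain hsum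
  have hstar0 : xstar ∈ W x0 := hstar 0
  refine ⟨xstar, hstar0, fun u hu => le_antisymm ?_ (hq _ _)⟩
  have hbound : ∀ n : ℕ, g u - g xstar ≤ 1 / ((n : ℝ) + 1) := by
    intro n
    have h1 := hnear n (xs n) (hmem n) u (htrans _ _ _ (hstar n) hu)
    have h2 := hgap _ (hmem (n + 1)) _ (hstar (n + 1))
    rw [hsucc] at h2
    have h3 := mul_nonneg hc.le (hq (next n (xs n)) xstar)
    linarith
  have hle : g u - g xstar ≤ 0 :=
    ge_of_tendsto' tendsto_one_div_add_atTop_nhds_zero_nat hbound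
  have := hgap _ hstar0 u hu
  nlinarith

/-- If `a - b - r • k ∈ Θ`, passing from `a` to `b` raises
`sup {s | y₀ - · - s • k ∈ Θ}` by at least `r`. Nonemptiness and boundedness keep the real-valued
suprema from taking junk values. -/
lemma image_gap {Y : Type*} [AddCommGroup Y] [Module ℝ Y] (Θ : Set Y)
    (hadd : ∀ a ∈ Θ, ∀ b ∈ Θ, a + b ∈ Θ) (k y0 a b : Y) (r : ℝ) (hab : a - b - r • k ∈ Θ)
    (hne : {s : ℝ | y0 - a - s • k ∈ Θ}.Nonempty)
    (hbdd : BddAbove {s : ℝ | y0 - b - s • k ∈ Θ}) :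
    r ≤ sSup {s : ℝ | y0 - b - s • k ∈ Θ} - sSup {s : ℝ | y0 - a - s • k ∈ Θ} := by
  have : sSup {s : ℝ | y0 - a - s • k ∈ Θ} ≤ sSup {s : ℝ | y0 - b - s • k ∈ Θ} - r := by
    refine csSup_le hne fun s hs => le_sub_iff_add_le.mpr (le_csSup hbdd ?_)
    have h := hadd _ hs _ hab
    rw [Set.mem_ofPred_eq]
    convert h using 1
    module
  linarith

/-- variational principle for efficient solutions under variable
domination (Theorem `thm:Pareto`, main conclusion): under (E1)–(E3) there exists
`x⋆ ∈ W x₀` with `q x⋆ u = 0` for every `u ∈ W x⋆`.  Here `Θ := D (f x₀)` and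
`W x := {u | f x − f u − √ε·q(x,u)•k ∈ Θ}`. -/
theorem EVP_efficient_variable_domination
    {X Y : Type*} [Nonempty X] [AddCommGroup Y] [Module ℝ Y]
    (q : X → X → ℝ)
    (hq_nonneg : ∀ x x' : X, 0 ≤ q x x')
    (hq_refl : ∀ x : X, q x x = 0)
    (hq_tri : ∀ x x' x'' : X, q x x'' ≤ q x x' + q x' x'')
    (k : Y) (hk : k ≠ 0)
    (D : Y → Set Y) (f : X → Y) (x0 : X) (ε : ℝ) (hε : 0 < ε)
    (W : X → Set X)
    (hW : ∀ x : X, W x =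
      {u : X | f x - f u - (Real.sqrt ε * q x u) • k ∈ D (f x0)})
    -- (E1) boundedness
    (hE1 : ∃ τ : ℝ, ∀ x ∈ W x0,
      (τ : EReal) ≤ gerstewitz (D (f x0)) k (f x - f x0))
    -- (E2) limiting monotonicity
    (hE2 : ∀ xs : ℕ → X, (∀ n : ℕ, xs (n + 1) ∈ W (xs n)) →
      (Summable fun n : ℕ => q (xs n) (xs (n + 1))) →
      ∃ xstar : X, ∀ n : ℕ, xstar ∈ W (xs n))
    -- (E3) scalarization conditions
    (hE3vcl : ∀ y : Y,
      (∀ l : ℝ, 0 < l → ∃ t ∈ Set.Icc (0 : ℝ) l, y + t • k ∈ D (f x0)) →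
      y ∈ D (f x0))
    (hE3zero : (0 : Y) ∈ D (f x0))
    (hE3add : ∀ a ∈ D (f x0), ∀ b ∈ D (f x0), a + b ∈ D (f x0))
    (hE3cone : ∀ a ∈ D (f x0), ∀ t : ℝ, 0 ≤ t → a + t • k ∈ D (f x0))
    (hE3pointed : D (f x0) ∩ {z : Y | ∃ t : ℝ, 0 ≤ t ∧ z = -(t • k)} = {0}) :
    ∃ xstar ∈ W x0, ∀ u ∈ W xstar, q xstar u = 0 := by
  obtain ⟨τ, hτ⟩ := hE1
  have hmemW : ∀ x u, u ∈ W x ↔ f x - f u - (Real.sqrt ε * q x u) • k ∈ D (f x0) := by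
    intro x u
    rw [hW]
    rfl
  have hrefl : ∀ x, x ∈ W x := by
    intro x
    rw [hmemW]
    simpa [hq_refl] using hE3zero
  have htrans : ∀ x y z, y ∈ W x → z ∈ W y → z ∈ W x := by
    intro x y z hy hz
    rw [hmemW] at hy hz ⊢
    -- The triangle inequality leaves a nonnegative multiple of `k`, absorbed by the cone condition.
    have h := hE3cone _ (hE3add _ hy _ hz) (Real.sqrt ε * (q x y + q y z - q x z))
      (mul_nonneg (Real.sqrt_nonneg ε) (by linarith [hq_tri x y z]))
    convert h using 1
    module
  have hupper : ∀ x ∈ W x0, ∀ s ∈ {s : ℝ | f x0 - f x - s • k ∈ D (f x0)}, s ≤ -τ := by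
    intro x hx s hs
    have hle : gerstewitz (D (f x0)) k (f x - f x0) ≤ ((-s : ℝ) : EReal) := by
      refine sInf_le ⟨-s, ?_, rfl⟩
      rw [Set.mem_ofPred_eq] at hs ⊢
      convert hs using 1
      module
    have := EReal.coe_le_coe_iff.mp ((hτ x hx).trans hle)
    linarith
  have hne : ∀ x ∈ W x0, {s : ℝ | f x0 - f x - s • k ∈ D (f x0)}.Nonempty :=
    fun x hx => ⟨_, (hmemW x0 x).mp hx⟩
  exact exists_maximal_of_gap q hq_nonneg W hrefl htrans x0
    (fun x => sSup {s : ℝ | f x0 - f x - s • k ∈ D (f x0)}) (-τ)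
    (fun x hx => csSup_le (hne x hx) (hupper x hx)) (Real.sqrt ε) (Real.sqrt_pos.mpr hε)
    (fun x hx u hu => image_gap (D (f x0)) hE3add k (f x0) (f x) (f u) _ ((hmemW x u).mp hu)
      (hne x hx) ⟨-τ, hupper u (htrans _ _ _ hx hu)⟩) hE2
end

section
/- Under hypotheses (E1), (E2), (E3), and (E4), there exists x⋆ ∈ X such that: (i) f(x₀) − f(x⋆) − √ε·q(x₀,x⋆)•k ∈ Θ; and (ii) for every x ∈ X with x ≠ x⋆, f(x⋆) − f(x) − √ε·q(x⋆,x)•k ∉ Θ. -/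
/-!
Domination is turned into a real-valued decrease. On `W x0` the Gerstewitz function `ψ` takes
finite values, bounded below by `τ`, and `u ∈ W x` forces `√ε * q x u ≤ ψ x - ψ u`, because `Θ` is
closed under addition (`sInf_scalarization_add_le`). The relation `u ∈ W x` is reflexive and
transitive, by the triangle inequality and `Θ + cone k ⊆ Θ`. The Dancs-Hegedüs-Medvegyev argument
(`exists_subsingleton_dominated`) then chooses `xₙ₊₁ ∈ W (xₙ)` minimizing `ψ` on `W (xₙ)`
up to `2⁻ⁿ`. The sums of `q (xₙ) (xₙ₊₁)` telescope, so (E2) gives some `xstar` in every `W (xₙ)`. Every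
point of `W xstar` lies in all the `W (xₙ)` too, so near-minimality makes it a forward limit of
`xₙ`, and uniqueness of forward limits identifies it with `xstar`.
-/

open Filter Topology

/-- Dancs-Hegedüs-Medvegyev principle: for a reflexive and transitive relation `u ∈ W x`
along which a real function `ψ`, bounded below on `W x0`, decreases by at least `c * q x u`,
some point of `W x0` is dominated by nothing but itself, provided descending sequences with
summable `q`-steps have a common lower bound and forward limits are unique. -/
lemma exists_subsingleton_dominated {X : Type*} (q : X → X → ℝ)
    (hq_nonneg : ∀ x x' : X, 0 ≤ q x x') (W : X → Set X) (x0 : X) (ψ : X → ℝ) (c τ : ℝ)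
    (hc : 0 < c)
    (hrefl : ∀ x, x ∈ W x)
    (htrans : ∀ x u v, u ∈ W x → v ∈ W u → v ∈ W x)
    (hτ : ∀ x ∈ W x0, τ ≤ ψ x)
    (hdec : ∀ x ∈ W x0, ∀ u ∈ W x, ψ u + c * q x u ≤ ψ x)
    (hlim : ∀ xs : ℕ → X, (∀ n : ℕ, xs (n + 1) ∈ W (xs n)) →
      (Summable fun n : ℕ => q (xs n) (xs (n + 1))) →
      ∃ xstar : X, ∀ n : ℕ, xstar ∈ W (xs n))
    (huniq : ∀ (xs : ℕ → X) (a b : X),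
      Tendsto (fun n : ℕ => q (xs n) a) atTop (𝓝 0) →
      Tendsto (fun n : ℕ => q (xs n) b) atTop (𝓝 0) → a = b) :
    ∃ xstar ∈ W x0, ∀ x ∈ W xstar, x = xstar := by
  have step : ∀ (n : ℕ) (x : W x0), ∃ u : W x0, (u : X) ∈ W x ∧
      ∀ v ∈ W (x : X), ψ u ≤ ψ v + (1 / 2 : ℝ) ^ n := by
    rintro n ⟨x, hx⟩
    have hb : BddBelow (ψ '' W x) := by
      refine ⟨τ, ?_⟩
      rintro _ ⟨v, hv, rfl⟩
      exact hτ v (htrans _ _ _ hx hv)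
    have hlt : sInf (ψ '' W x) < sInf (ψ '' W x) + (1 / 2 : ℝ) ^ n := by
      have : (0 : ℝ) < (1 / 2 : ℝ) ^ n := by positivity
      linarith
    obtain ⟨_, ⟨u, hu, rfl⟩, hlt'⟩ := exists_lt_of_csInf_lt (Set.Nonempty.image ψ ⟨x, hrefl x⟩) hlt
    refine ⟨⟨u, htrans _ _ _ hx hu⟩, hu, fun v hv => ?_⟩
    have := csInf_le hb ⟨v, hv, rfl⟩
    dsimp only
    linarith
  choose g hgW hgψ using step
  let y : ℕ → W x0 := fun n => Nat.rec (motive := fun _ => W x0) ⟨x0, hrefl x0⟩ g n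
  have hyW (n : ℕ) : (y (n + 1) : X) ∈ W (y n : X) := hgW n (y n)
  have hyψ (n : ℕ) : ∀ v ∈ W (y n : X), ψ (y (n + 1)) ≤ ψ v + (1 / 2 : ℝ) ^ n := hgψ n (y n)
  have htel (n : ℕ) :
      ∑ i ∈ Finset.range n, c * q (y i) (y (i + 1)) ≤ ψ x0 - ψ (y n) := by
    induction n with
    | zero => simp [y]
    | succ n ih =>
      rw [Finset.sum_range_succ]
      have := hdec _ (y n).2 _ (hyW n)
      linarith
  have hsum : Summable fun n : ℕ => q (y n) (y (n + 1)) := by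
    refine (summable_mul_left_iff hc.ne').1
      (summable_of_sum_range_le (c := ψ x0 - τ)
        (fun n => mul_nonneg hc.le (hq_nonneg _ _)) fun n => ?_)
    have := hτ _ (y n).2
    linarith [htel n]
  obtain ⟨z, hz⟩ := hlim (fun n => y n) hyW hsum
  have hconv : ∀ x, (∀ n, x ∈ W (y n : X)) →
      Tendsto (fun n : ℕ => q (y (n + 1)) x) atTop (𝓝 0) := by
    intro x hx
    have hpow : Tendsto (fun n : ℕ => (1 / 2 : ℝ) ^ n / c) atTop (𝓝 0) := by
      simpa using (tendsto_pow_atTop_nhds_zero_of_lt_one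
        (by norm_num : (0 : ℝ) ≤ 1 / 2) (by norm_num)).div_const c
    refine squeeze_zero (fun n => hq_nonneg _ _) (fun n => ?_) hpow
    rw [le_div_iff₀ hc]
    have h1 := hdec _ (y (n + 1)).2 x (hx (n + 1))
    have h2 := hyψ n x (hx n)
    linarith
  refine ⟨z, hz 0, fun x hx => ?_⟩
  exact huniq (fun n => y (n + 1)) x z
    (hconv x fun n => htrans _ _ _ (hz n) hx) (hconv z hz)

/-- If `a - b - r • k` lies in an additively closed set `Θ`, the infimum of `{t | t • k - x ∈ Θ}`
drops by at least `r` from `x = a` to `x = b`. Boundedness below at `b` and nonemptiness at `a` keep both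
real infima away from junk values. -/
lemma sInf_scalarization_add_le {Y : Type*} [AddCommGroup Y] [Module ℝ Y]
    {Θ : Set Y} {k a b : Y} {r : ℝ}
    (hadd : ∀ v ∈ Θ, ∀ w ∈ Θ, v + w ∈ Θ)
    (hne : {t : ℝ | t • k - a ∈ Θ}.Nonempty) (hbdd : BddBelow {t : ℝ | t • k - b ∈ Θ})
    (hab : a - b - r • k ∈ Θ) :
    sInf {t : ℝ | t • k - b ∈ Θ} + r ≤ sInf {t : ℝ | t • k - a ∈ Θ} := by
  refine le_csInf hne fun t ht => ?_
  have h : (t - r) • k - b ∈ Θ := by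
    convert hadd _ ht _ hab using 1
    module
  have := csInf_le hbdd h
  linarith

/-- variational principle for efficient solutions under variable
domination (Theorem `thm:Pareto`, with (E4)): under (E1)–(E4) there exists `x⋆`
such that (i) `f x₀ − f x⋆ − √ε·q(x₀,x⋆)•k ∈ Θ` and (ii) for every `x ≠ x⋆`,
`f x⋆ − f x − √ε·q(x⋆,x)•k ∉ Θ`, where `Θ := D (f x₀)`. -/
theorem EVP_efficient_variable_domination_hausdorff
    {X Y : Type*} [Nonempty X] [AddCommGroup Y] [Module ℝ Y]
    (q : X → X → ℝ)
    (hq_nonneg : ∀ x x' : X, 0 ≤ q x x')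
    (hq_refl : ∀ x : X, q x x = 0)
    (hq_tri : ∀ x x' x'' : X, q x x'' ≤ q x x' + q x' x'')
    (k : Y) (hk : k ≠ 0)
    (D : Y → Set Y) (f : X → Y) (x0 : X) (ε : ℝ) (hε : 0 < ε)
    (W : X → Set X)
    (hW : ∀ x : X, W x =
      {u : X | f x - f u - (Real.sqrt ε * q x u) • k ∈ D (f x0)})
    -- (E1) boundedness
    (hE1 : ∃ τ : ℝ, ∀ x ∈ W x0,
      (τ : EReal) ≤ gerstewitz (D (f x0)) k (f x - f x0))
    -- (E2) limiting monotonicity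
    (hE2 : ∀ xs : ℕ → X, (∀ n : ℕ, xs (n + 1) ∈ W (xs n)) →
      (Summable fun n : ℕ => q (xs n) (xs (n + 1))) →
      ∃ xstar : X, ∀ n : ℕ, xstar ∈ W (xs n))
    -- (E3) scalarization conditions
    (hE3vcl : ∀ y : Y,
      (∀ l : ℝ, 0 < l → ∃ t ∈ Set.Icc (0 : ℝ) l, y + t • k ∈ D (f x0)) →
      y ∈ D (f x0))
    (hE3zero : (0 : Y) ∈ D (f x0))
    (hE3add : ∀ a ∈ D (f x0), ∀ b ∈ D (f x0), a + b ∈ D (f x0))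
    (hE3cone : ∀ a ∈ D (f x0), ∀ t : ℝ, 0 ≤ t → a + t • k ∈ D (f x0))
    (hE3pointed : D (f x0) ∩ {z : Y | ∃ t : ℝ, 0 ≤ t ∧ z = -(t • k)} = {0})
    -- (E4) forward limits are unique
    (hE4 : ∀ (xs : ℕ → X) (a b : X),
      Tendsto (fun n : ℕ => q (xs n) a) atTop (𝓝 0) →
      Tendsto (fun n : ℕ => q (xs n) b) atTop (𝓝 0) → a = b) :
    ∃ xstar : X,
      f x0 - f xstar - (Real.sqrt ε * q x0 xstar) • k ∈ D (f x0) ∧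
      ∀ x : X, x ≠ xstar →
        f xstar - f x - (Real.sqrt ε * q xstar x) • k ∉ D (f x0) := by
  obtain ⟨τ, hτ⟩ := hE1
  have mem (x u : X) :
      u ∈ W x ↔ f x - f u - (Real.sqrt ε * q x u) • k ∈ D (f x0) := by
    rw [hW]; rfl
  have hs : 0 < Real.sqrt ε := Real.sqrt_pos.2 hε
  -- `sInf (T x)` in `ℝ` is the finite value of the Gerstewitz function at `f x - f x0` for `x ∈ W x0`.
  let T : X → Set ℝ := fun x => {t : ℝ | t • k - (f x - f x0) ∈ D (f x0)}
  have hTne : ∀ x ∈ W x0, (T x).Nonempty := by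
    intro x hx
    refine ⟨-(Real.sqrt ε * q x0 x), ?_⟩
    have h := (mem _ _).1 hx
    change _ • k - (f x - f x0) ∈ D (f x0)
    convert h using 1
    module
  have hTτ : ∀ x ∈ W x0, ∀ t ∈ T x, τ ≤ t := by
    intro x hx t ht
    exact EReal.coe_le_coe_iff.1 ((hτ x hx).trans (sInf_le ⟨t, ht, rfl⟩))
  have hrefl : ∀ x, x ∈ W x := by
    intro x
    rw [mem]
    simpa [hq_refl] using hE3zero
  have htrans : ∀ x u v, u ∈ W x → v ∈ W u → v ∈ W x := by
    intro x u v hu hv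
    rw [mem] at hu hv ⊢
    -- The slack in the triangle inequality is absorbed by `cone k`.
    have h := hE3cone _ (hE3add _ hu _ hv) (Real.sqrt ε * (q x u + q u v - q x v))
      (mul_nonneg hs.le (sub_nonneg.2 (hq_tri x u v)))
    convert h using 1
    module
  obtain ⟨z, hz, hzu⟩ := exists_subsingleton_dominated q hq_nonneg W x0
    (fun x => sInf (T x)) (Real.sqrt ε) τ hs hrefl htrans
    (fun x hx => le_csInf (hTne x hx) (hTτ x hx))
    (fun x hx u hu => by
      refine sInf_scalarization_add_le hE3add (hTne x hx)
        ⟨τ, hTτ u (htrans _ _ _ hx hu)⟩ ?_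
      rw [sub_sub_sub_cancel_right]
      exact (mem _ _).1 hu)
    hE2 hE4
  exact ⟨z, (mem _ _).1 hz, fun x hx hmem => hx (hzu x ((mem _ _).2 hmem))⟩
end

section
/- Under hypotheses (E1), (E2), (E3), (E4), if additionally x₀ is an εk-efficient solution of f with respect to D, i.e., f(x) ∉ f(x₀) − ε•k − (D(f(x₀)) ∖ {0}) for all x ∈ X, then there exists x⋆ ∈ X such that: (i) f(x₀) − f(x⋆) − √ε·q(x₀,x⋆)•k ∈ Θ; (ii) for every x ≠ x⋆, f(x⋆) − f(x) − √ε·q(x⋆,x)•k ∉ Θ; (iii) q(x₀,x⋆) ≤ √ε; and moreover, if D(f(x⋆)) ⊆ D(f(x₀)), then f(x⋆) − f(x) − √ε·q(x⋆,x)•k ∉ D(f(x⋆)) for every x ≠ x⋆. -/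
/-!
The argument is Ekeland's. Put `Θ := D (f x0)` and `c := √ε`. Since `Θ` is closed under addition and
under adding nonnegative multiples of `k`, the relation `u ∈ W x` is a preorder (the triangle
inequality for `q` enters here). The Gerstewitz function is monotone along it with a gain:
`ψ(u) + c * q x u ≤ ψ(x)` whenever `u ∈ W x`, because adding the membership that defines `W x` to
`t • k - (f x - f x0) ∈ Θ` yields `(t - c * q x u) • k - (f u - f x0) ∈ Θ`. On `W x0` the function
`ψ` is bounded below by (E1) and above by `0`, hence real-valued.

`exists_maximal_of_potential` isolates the order-theoretic core: starting at `x0`, choose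
`xₙ₊₁ ∈ W xₙ` nearly minimizing `ψ` over `W xₙ`. The gains telescope, so `∑ q xₙ xₙ₊₁ < ∞` and the
limiting monotonicity gives a common point `x⋆` of all `W xₙ`. Any `x ∈ W x⋆` lies in every `W xₙ` too,
and near-minimality forces `q xₙ x → 0` as well as `q xₙ x⋆ → 0`; uniqueness of forward limits gives
`x = x⋆`.

For the distance bound, `q x0 x⋆ > √ε` would put `f x0 - ε • k - f x⋆` in `Θ`, so it vanishes by
efficiency; then a strictly negative multiple of `k` lies in `Θ`, contradicting pointedness.
-/

open Filter Topology

/-- Existence of a maximal element above `x0` for a preorder `u ∈ W x` along which a real potential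
`p`, bounded below on `W x0`, decreases by at least a fixed multiple of `q`. -/
theorem exists_maximal_of_potential {X : Type*} (q : X → X → ℝ)
    (hq_nonneg : ∀ x x' : X, 0 ≤ q x x') (W : X → Set X) (x0 : X)
    (hrefl : ∀ x, x ∈ W x) (htrans : ∀ x u v, u ∈ W x → v ∈ W u → v ∈ W x)
    (p : X → ℝ) (c τ : ℝ) (hc : 0 < c) (hτ : ∀ x ∈ W x0, τ ≤ p x)
    (hp : ∀ x ∈ W x0, ∀ u ∈ W x, p u + c * q x u ≤ p x)
    (hE2 : ∀ xs : ℕ → X, (∀ n : ℕ, xs (n + 1) ∈ W (xs n)) →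
      (Summable fun n : ℕ => q (xs n) (xs (n + 1))) →
      ∃ xstar : X, ∀ n : ℕ, xstar ∈ W (xs n))
    (hE4 : ∀ (xs : ℕ → X) (a b : X),
      Tendsto (fun n : ℕ => q (xs n) a) atTop (𝓝 0) →
      Tendsto (fun n : ℕ => q (xs n) b) atTop (𝓝 0) → a = b) :
    ∃ xstar ∈ W x0, ∀ x ∈ W xstar, x = xstar := by
  have hstep : ∀ (n : ℕ) (x : X), ∃ u ∈ W x,
      x ∈ W x0 → ∀ v ∈ W x, p u ≤ p v + (1 / 2 : ℝ) ^ n := by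
    intro n x
    by_cases hx : x ∈ W x0
    · have hbdd : BddBelow (p '' W x) := by
        refine ⟨τ, ?_⟩
        rintro _ ⟨v, hv, rfl⟩
        exact hτ v (htrans _ _ _ hx hv)
      have hlt : sInf (p '' W x) < sInf (p '' W x) + (1 / 2 : ℝ) ^ n := by
        have : (0 : ℝ) < (1 / 2 : ℝ) ^ n := by positivity
        linarith
      obtain ⟨_, ⟨u, hu, rfl⟩, hlt'⟩ :=
        exists_lt_of_csInf_lt (Set.Nonempty.image p ⟨x, hrefl x⟩) hlt
      refine ⟨u, hu, fun _ v hv => ?_⟩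
      have := csInf_le hbdd (Set.mem_image_of_mem p hv)
      linarith
    · exact ⟨x, hrefl x, fun h => absurd h hx⟩
  choose g hgW hgmin using hstep
  let xs : ℕ → X := fun n => Nat.rec x0 (fun n x => g n x) n
  have hxs : ∀ n, xs (n + 1) = g n (xs n) := fun _ => rfl
  have hmem : ∀ n, xs (n + 1) ∈ W (xs n) := fun n => hgW n (xs n)
  have hmem0 : ∀ n, xs n ∈ W x0 := by
    intro n
    induction n with
    | zero => exact hrefl x0
    | succ n ih => exact htrans _ _ _ ih (hmem n)
  have htel : ∀ n, c * ∑ i ∈ Finset.range n, q (xs i) (xs (i + 1)) ≤ p x0 - p (xs n) := by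
    intro n
    induction n with
    | zero => simp [xs]
    | succ n ih =>
      have := hp _ (hmem0 n) _ (hmem n)
      rw [Finset.sum_range_succ, mul_add]
      linarith
  have hsum : Summable fun n : ℕ => q (xs n) (xs (n + 1)) := by
    refine summable_of_sum_range_le (c := (p x0 - τ) / c) (fun n => hq_nonneg _ _) fun n => ?_
    rw [le_div_iff₀ hc, mul_comm]
    linarith [htel n, hτ _ (hmem0 n)]
  obtain ⟨xstar, hstar⟩ := hE2 xs hmem hsum
  have hlim : ∀ x, (∀ n, x ∈ W (xs n)) → Tendsto (fun n => q (xs (n + 1)) x) atTop (𝓝 0) := by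
    intro x hx
    have hpow : Tendsto (fun n : ℕ => (1 / 2 : ℝ) ^ n / c) atTop (𝓝 0) := by
      simpa using (tendsto_pow_atTop_nhds_zero_of_lt_one (r := (1 / 2 : ℝ))
        (by norm_num) (by norm_num)).div_const c
    refine squeeze_zero (fun n => hq_nonneg _ _) (fun n => ?_) hpow
    rw [le_div_iff₀ hc, mul_comm]
    have h1 := hp _ (hmem0 (n + 1)) _ (hx (n + 1))
    have h2 := hgmin n (xs n) (hmem0 n) x (hx n)
    rw [← hxs] at h2
    linarith
  exact ⟨xstar, hstar 0, fun x hx => hE4 (fun n => xs (n + 1)) x xstar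
    (hlim x fun n => htrans _ _ _ (hstar n) hx) (hlim xstar hstar)⟩


/-- variational principle for efficient solutions under variable
domination (Theorem `thm:Pareto`, full version): under (E1)–(E4), if `x₀` is an
`εk`-efficient solution of `f` w.r.t. `D`, there exists `x⋆` with (i), (ii),
(iii) `q x₀ x⋆ ≤ √ε`, and moreover, if `D (f x⋆) ⊆ D (f x₀)`, then `x⋆` is
`D`-efficient for the perturbed mapping. -/
theorem EVP_efficient_variable_domination_full
    {X Y : Type*} [Nonempty X] [AddCommGroup Y] [Module ℝ Y]
    (q : X → X → ℝ)
    (hq_nonneg : ∀ x x' : X, 0 ≤ q x x')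
    (hq_refl : ∀ x : X, q x x = 0)
    (hq_tri : ∀ x x' x'' : X, q x x'' ≤ q x x' + q x' x'')
    (k : Y) (hk : k ≠ 0)
    (D : Y → Set Y) (f : X → Y) (x0 : X) (ε : ℝ) (hε : 0 < ε)
    (W : X → Set X)
    (hW : ∀ x : X, W x =
      {u : X | f x - f u - (Real.sqrt ε * q x u) • k ∈ D (f x0)})
    -- (E1) boundedness
    (hE1 : ∃ τ : ℝ, ∀ x ∈ W x0,
      (τ : EReal) ≤ gerstewitz (D (f x0)) k (f x - f x0))
    -- (E2) limiting monotonicity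
    (hE2 : ∀ xs : ℕ → X, (∀ n : ℕ, xs (n + 1) ∈ W (xs n)) →
      (Summable fun n : ℕ => q (xs n) (xs (n + 1))) →
      ∃ xstar : X, ∀ n : ℕ, xstar ∈ W (xs n))
    -- (E3) scalarization conditions
    (hE3vcl : ∀ y : Y,
      (∀ l : ℝ, 0 < l → ∃ t ∈ Set.Icc (0 : ℝ) l, y + t • k ∈ D (f x0)) →
      y ∈ D (f x0))
    (hE3zero : (0 : Y) ∈ D (f x0))
    (hE3add : ∀ a ∈ D (f x0), ∀ b ∈ D (f x0), a + b ∈ D (f x0))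
    (hE3cone : ∀ a ∈ D (f x0), ∀ t : ℝ, 0 ≤ t → a + t • k ∈ D (f x0))
    (hE3pointed : D (f x0) ∩ {z : Y | ∃ t : ℝ, 0 ≤ t ∧ z = -(t • k)} = {0})
    -- (E4) forward limits are unique
    (hE4 : ∀ (xs : ℕ → X) (a b : X),
      Tendsto (fun n : ℕ => q (xs n) a) atTop (𝓝 0) →
      Tendsto (fun n : ℕ => q (xs n) b) atTop (𝓝 0) → a = b)
    -- x₀ is an εk-efficient solution of f with respect to D
    (hx0 : ∀ x : X, f x0 - ε • k - f x ∉ D (f x0) \ {0}) :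
    ∃ xstar : X,
      f x0 - f xstar - (Real.sqrt ε * q x0 xstar) • k ∈ D (f x0) ∧
      (∀ x : X, x ≠ xstar →
        f xstar - f x - (Real.sqrt ε * q xstar x) • k ∉ D (f x0)) ∧
      q x0 xstar ≤ Real.sqrt ε ∧
      (D (f xstar) ⊆ D (f x0) → ∀ x : X, x ≠ xstar →
        f xstar - f x - (Real.sqrt ε * q xstar x) • k ∉ D (f xstar)) := by
  have hc : 0 < Real.sqrt ε := Real.sqrt_pos.mpr hε
  have hcc : Real.sqrt ε * Real.sqrt ε = ε := Real.mul_self_sqrt hε.le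
  generalize Real.sqrt ε = c at *
  have hWmem : ∀ x u, u ∈ W x ↔ f x - f u - (c * q x u) • k ∈ D (f x0) := by
    intro x u
    rw [hW]
    rfl
  have hrefl : ∀ x, x ∈ W x := by
    intro x
    rw [hWmem]
    simpa [hq_refl] using hE3zero
  have htrans : ∀ x u v, u ∈ W x → v ∈ W u → v ∈ W x := by
    intro x u v hu hv
    rw [hWmem] at *
    have h : 0 ≤ c * (q x u + q u v - q x v) :=
      mul_nonneg hc.le (by linarith [hq_tri x u v])
    convert hE3cone _ (hE3add _ hu _ hv) _ h using 1
    module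
  -- `T x` is the set of reals whose infimum is `ψ(x)`.
  let T : X → Set ℝ := fun x => {t : ℝ | t • k - (f x - f x0) ∈ D (f x0)}
  have hTstep : ∀ x, ∀ u ∈ W x, ∀ t ∈ T x, t - c * q x u ∈ T u := by
    intro x u hu t ht
    rw [hWmem] at hu
    change _ • k - (f u - f x0) ∈ D (f x0)
    convert hE3add _ ht _ hu using 1
    module
  have hT0 : (0 : ℝ) ∈ T x0 := by
    change (0 : ℝ) • k - (f x0 - f x0) ∈ D (f x0)
    simpa using hE3zero
  have hTne : ∀ x ∈ W x0, (T x).Nonempty := fun x hx => ⟨_, hTstep x0 x hx 0 hT0⟩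
  obtain ⟨τ, hτ⟩ := hE1
  have hTτ : ∀ x ∈ W x0, ∀ t ∈ T x, τ ≤ t := fun x hx t ht =>
    EReal.coe_le_coe_iff.mp ((hτ x hx).trans (sInf_le (Set.mem_image_of_mem _ ht)))
  obtain ⟨xstar, hstar, hmax⟩ := exists_maximal_of_potential q hq_nonneg W x0 hrefl htrans
    (fun x => sInf (T x)) c τ hc (fun x hx => le_csInf (hTne x hx) (hTτ x hx))
    (fun x hx u hu => le_csInf (hTne x hx) fun t ht => by
      have := csInf_le ⟨τ, hTτ u (htrans _ _ _ hx hu)⟩ (hTstep x u hu t ht)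
      linarith) hE2 hE4
  have h2 : ∀ x : X, x ≠ xstar → f xstar - f x - (c * q xstar x) • k ∉ D (f x0) :=
    fun x hne h => hne (hmax x ((hWmem _ _).mpr h))
  have h1 := (hWmem _ _).mp hstar
  refine ⟨xstar, h1, h2, ?_, fun hsub x hne h => h2 x hne (hsub h)⟩
  by_contra! hlt
  have hpos : 0 < c * q x0 xstar - ε := by
    have := mul_lt_mul_of_pos_left hlt hc
    linarith
  have hmem : f x0 - ε • k - f xstar ∈ D (f x0) := by
    convert hE3cone _ h1 _ hpos.le using 1
    module
  have hzero : f x0 - ε • k - f xstar = 0 := by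
    by_contra hne
    exact hx0 xstar ⟨hmem, hne⟩
  have hneg : -((c * q x0 xstar - ε) • k) ∈ D (f x0) := by
    have heq : -((c * q x0 xstar - ε) • k) = f x0 - f xstar - (c * q x0 xstar) • k := by
      rw [← sub_eq_zero, ← neg_eq_zero, ← hzero]
      module
    rwa [heq]
  have hmem0 : -((c * q x0 xstar - ε) • k) ∈ ({0} : Set Y) :=
    hE3pointed ▸ ⟨hneg, _, hpos.le, rfl⟩
  exact smul_ne_zero hpos.ne' hk (neg_eq_zero.mp hmem0)
end

section
/- Assume (X,q) is forward-complete, Θ satisfies (E3), and f is Θ-decreasing lower semicontinuous over W(x₀). Then W satisfies the limiting monotonicity condition: for every sequence (zₙ) contained in W(x₀) with z_{n+1} ∈ W(zₙ) for all n and ∑ₙ q(zₙ,z_{n+1}) < ∞, there exists z⋆ ∈ X with z⋆ ∈ W(zₙ) for all n. -/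
/-!
Consecutive differences `f (zs n) - f (zs (n + 1))` lie in `Θ`, since `Θ` absorbs the nonnegative
multiples of `k`. Summability makes `zs` forward-Cauchy (`quasi_dist_le_sum`), so it has a forward
limit `z⋆`, and decreasing lower semicontinuity gives `f (zs n) - f z⋆ ∈ Θ` for all `n`. As
`u ∈ W x` is a transitive relation, `zs p ∈ W (zs n)` for `n ≤ p`, and adding
`f (zs p) - f z⋆ ∈ Θ` yields `f (zs n) - f z⋆ - √ε q(zs n, zs p) k ∈ Θ`. By the triangle
inequality this point is at most `f (zs n) - f z⋆ - √ε q(zs n, z⋆) k + √ε q(zs p, z⋆) k` in the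
direction `k`, so the latter is in `Θ`; letting `p → ∞`, the `k`-vectorial closedness of `Θ` removes
the last term.
-/

open Filter Topology

/-- Iterated triangle inequality along a sequence, with the path length written as a difference of
partial sums. -/
lemma quasi_dist_le_sum {X : Type*} (q : X → X → ℝ) (hq_refl : ∀ x : X, q x x = 0)
    (hq_tri : ∀ x x' x'' : X, q x x'' ≤ q x x' + q x' x'') (zs : ℕ → X) (n m : ℕ) :
    q (zs n) (zs (n + m)) ≤ ∑ i ∈ Finset.range (n + m), q (zs i) (zs (i + 1))
      - ∑ i ∈ Finset.range n, q (zs i) (zs (i + 1)) := by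
  induction m with
  | zero => simp [hq_refl]
  | succ m ih =>
    have h := hq_tri (zs n) (zs (n + m)) (zs (n + m + 1))
    rw [← add_assoc, Finset.sum_range_succ]
    linarith

/-- sufficient conditions for the limiting monotonicity condition
(Proposition `sufE2a`): if `(X,q)` is forward-complete, `Θ := D (f x₀)` satisfies
(E3), and `f` is `Θ`-decreasing lower semicontinuous over `W x₀`, then `W`
satisfies the limiting monotonicity condition for generalized Picard sequences
contained in `W x₀`. -/
theorem limiting_monotonicity_of_decreasing_lsc
    {X Y : Type*} [Nonempty X] [AddCommGroup Y] [Module ℝ Y]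
    (q : X → X → ℝ)
    (hq_nonneg : ∀ x x' : X, 0 ≤ q x x')
    (hq_refl : ∀ x : X, q x x = 0)
    (hq_tri : ∀ x x' x'' : X, q x x'' ≤ q x x' + q x' x'')
    -- forward-completeness of (X,q)
    (hcomplete : ∀ xs : ℕ → X,
      (∀ δ : ℝ, 0 < δ → ∃ N : ℕ, ∀ n ≥ N, ∀ m : ℕ, q (xs n) (xs (n + m)) < δ) →
      ∃ xstar : X, Tendsto (fun n : ℕ => q (xs n) xstar) atTop (𝓝 0))
    (k : Y) (hk : k ≠ 0)
    (D : Y → Set Y) (f : X → Y) (x0 : X) (ε : ℝ) (hε : 0 < ε)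
    (W : X → Set X)
    (hW : ∀ x : X, W x =
      {u : X | f x - f u - (Real.sqrt ε * q x u) • k ∈ D (f x0)})
    -- (E3) scalarization conditions for Θ := D (f x₀)
    (hE3vcl : ∀ y : Y,
      (∀ l : ℝ, 0 < l → ∃ t ∈ Set.Icc (0 : ℝ) l, y + t • k ∈ D (f x0)) →
      y ∈ D (f x0))
    (hE3zero : (0 : Y) ∈ D (f x0))
    (hE3add : ∀ a ∈ D (f x0), ∀ b ∈ D (f x0), a + b ∈ D (f x0))
    (hE3cone : ∀ a ∈ D (f x0), ∀ t : ℝ, 0 ≤ t → a + t • k ∈ D (f x0))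
    (hE3pointed : D (f x0) ∩ {z : Y | ∃ t : ℝ, 0 ≤ t ∧ z = -(t • k)} = {0})
    -- f is Θ-decreasing lower semicontinuous over W x₀
    (hlsc : ∀ xs : ℕ → X, (∀ n : ℕ, xs n ∈ W x0) →
      ∀ xstar : X, Tendsto (fun n : ℕ => q (xs n) xstar) atTop (𝓝 0) →
      (∀ n : ℕ, f (xs n) - f (xs (n + 1)) ∈ D (f x0)) →
      ∀ n : ℕ, f (xs n) - f xstar ∈ D (f x0)) :
    ∀ zs : ℕ → X, (∀ n : ℕ, zs n ∈ W x0) →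
      (∀ n : ℕ, zs (n + 1) ∈ W (zs n)) →
      (Summable fun n : ℕ => q (zs n) (zs (n + 1))) →
      ∃ zstar : X, ∀ n : ℕ, zstar ∈ W (zs n) := by
  intro zs hz0 hz hsum
  have hs : 0 ≤ Real.sqrt ε := Real.sqrt_nonneg ε
  have hWmem : ∀ x u, u ∈ W x ↔ f x - f u - (Real.sqrt ε * q x u) • k ∈ D (f x0) := by
    intro x u
    rw [hW]
    rfl
  obtain ⟨zstar, hlim⟩ := hcomplete zs (by
    intro δ hδ
    obtain ⟨N, hN⟩ := Metric.cauchySeq_iff.1 hsum.hasSum.tendsto_sum_nat.cauchySeq δ hδ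
    refine ⟨N, fun n hn m => ?_⟩
    have h := hN (n + m) (by omega) n hn
    rw [Real.dist_eq] at h
    exact (quasi_dist_le_sum q hq_refl hq_tri zs n m).trans_lt ((le_abs_self _).trans_lt h))
  have hdec : ∀ n, f (zs n) - f (zs (n + 1)) ∈ D (f x0) := by
    intro n
    simpa using hE3cone _ ((hWmem _ _).1 (hz n)) _ (mul_nonneg hs (hq_nonneg (zs n) (zs (n + 1))))
  have hstar := hlsc zs hz0 zstar hlim hdec
  have htrans : ∀ x y z, y ∈ W x → z ∈ W y → z ∈ W x := by
    intro x y z hy hzy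
    rw [hWmem] at *
    have h := hE3cone _ (hE3add _ hy _ hzy) (Real.sqrt ε * (q x y + q y z - q x z))
      (mul_nonneg hs (sub_nonneg.2 (hq_tri x y z)))
    convert h using 1
    module
  have hmem : ∀ n m, zs (n + m) ∈ W (zs n) := by
    intro n m
    induction m with
    | zero => simpa [hWmem, hq_refl] using hE3zero
    | succ m ih => exact htrans _ _ _ ih (hz (n + m))
  refine ⟨zstar, fun n => (hWmem _ _).2 (hE3vcl _ fun l hl => ?_)⟩
  have hlim' : Tendsto (fun p => Real.sqrt ε * q (zs p) zstar) atTop (𝓝 0) := by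
    simpa using hlim.const_mul (Real.sqrt ε)
  obtain ⟨p, hpl, hnp⟩ := ((hlim'.eventually_lt_const hl).and (eventually_ge_atTop n)).exists
  obtain ⟨m, rfl⟩ := Nat.exists_eq_add_of_le hnp
  refine ⟨_, ⟨mul_nonneg hs (hq_nonneg _ _), hpl.le⟩, ?_⟩
  have h := hE3cone _ (hE3add _ ((hWmem _ _).1 (hmem n m)) _ (hstar (n + m)))
    (Real.sqrt ε * (q (zs n) (zs (n + m)) + q (zs (n + m)) zstar - q (zs n) zstar))
    (mul_nonneg hs (sub_nonneg.2 (hq_tri _ _ _)))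
  convert h using 1
  module
end

section
/- Assume (X,q) is forward-complete, Θ satisfies (E3), and f is (Θ,k)-lower semicontinuous, i.e., for every x ∈ W(x₀) and every t ∈ ℝ the set L(x,t) := {u ∈ X : f(u) ∈ f(x) + t•k − Θ} is forward-sequentially closed (if a sequence in L(x,t) forward-converges to u⋆ then u⋆ ∈ L(x,t)). Then W satisfies the limiting monotonicity condition: for every sequence (zₙ) contained in W(x₀) with z_{n+1} ∈ W(zₙ) for all n and ∑ₙ q(zₙ,z_{n+1}) < ∞, there exists z⋆ ∈ X with z⋆ ∈ W(zₙ) for all n. -/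
open Filter Topology

/-!
Membership `u ∈ W x` is transitive, because `Θ` is closed under addition and under adding
nonnegative multiples of `k` (the triangle inequality costs such a multiple). A Picard sequence
with summable steps is forward-Cauchy, so it forward-converges to some `z⋆`. For fixed `n` and
`l > 0`, the triangle inequality through a late term `z j` gives `√ε q(z n, z j) ≥ √ε q(z n, z⋆) - l`,
so the tail of the sequence lies in the level set `L(z n, l - √ε q(z n, z⋆))`. That set is
forward-sequentially closed, so it contains `z⋆`, and vectorial closedness of `Θ` lets `l → 0`.
-/

/-- In a quasimetric, a sequence with summable consecutive distances is forward-Cauchy. -/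
lemma forward_cauchy_of_summable {X : Type*} (q : X → X → ℝ)
    (hq_nonneg : ∀ x x' : X, 0 ≤ q x x') (hq_refl : ∀ x : X, q x x = 0)
    (hq_tri : ∀ x x' x'' : X, q x x'' ≤ q x x' + q x' x'') (zs : ℕ → X)
    (hs : Summable fun n : ℕ => q (zs n) (zs (n + 1))) (δ : ℝ) (hδ : 0 < δ) :
    ∃ N : ℕ, ∀ n ≥ N, ∀ m : ℕ, q (zs n) (zs (n + m)) < δ := by
  have hpath : ∀ n m : ℕ, q (zs n) (zs (n + m)) ≤
      ∑ i ∈ Finset.range m, q (zs (i + n)) (zs (i + n + 1)) := by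
    intro n m
    induction m with
    | zero => simp [hq_refl]
    | succ m ih =>
      rw [Finset.sum_range_succ, add_comm m n, ← add_assoc n m 1]
      linarith [hq_tri (zs n) (zs (n + m)) (zs (n + m + 1))]
  obtain ⟨N, hN⟩ := eventually_atTop.1
    ((tendsto_sum_nat_add fun n : ℕ => q (zs n) (zs (n + 1))).eventually_lt_const hδ)
  refine ⟨N, fun n hn m => ((hpath n m).trans ?_).trans_lt (hN n hn)⟩
  exact ((summable_nat_add_iff n).2 hs).sum_le_tsum (Finset.range m)
    fun i _ => hq_nonneg _ _

/-- other sufficient conditions for the limiting monotonicity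
condition (Proposition `sufE2b`): if `(X,q)` is forward-complete, `Θ := D (f x₀)`
satisfies (E3), and `f` is `(Θ,k)`-lower semicontinuous (the level sets
`L(x,t) = {u | f u ∈ f x + t•k − Θ}` are forward-sequentially closed), then `W`
satisfies the limiting monotonicity condition for generalized Picard sequences
contained in `W x₀`. -/
theorem limiting_monotonicity_of_level_closedness
    {X Y : Type*} [Nonempty X] [AddCommGroup Y] [Module ℝ Y]
    (q : X → X → ℝ)
    (hq_nonneg : ∀ x x' : X, 0 ≤ q x x')
    (hq_refl : ∀ x : X, q x x = 0)
    (hq_tri : ∀ x x' x'' : X, q x x'' ≤ q x x' + q x' x'')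
    -- forward-completeness of (X,q)
    (hcomplete : ∀ xs : ℕ → X,
      (∀ δ : ℝ, 0 < δ → ∃ N : ℕ, ∀ n ≥ N, ∀ m : ℕ, q (xs n) (xs (n + m)) < δ) →
      ∃ xstar : X, Tendsto (fun n : ℕ => q (xs n) xstar) atTop (𝓝 0))
    (k : Y) (hk : k ≠ 0)
    (D : Y → Set Y) (f : X → Y) (x0 : X) (ε : ℝ) (hε : 0 < ε)
    (W : X → Set X)
    (hW : ∀ x : X, W x =
      {u : X | f x - f u - (Real.sqrt ε * q x u) • k ∈ D (f x0)})
    -- (E3) scalarization conditions for Θ := D (f x₀)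
    (hE3vcl : ∀ y : Y,
      (∀ l : ℝ, 0 < l → ∃ t ∈ Set.Icc (0 : ℝ) l, y + t • k ∈ D (f x0)) →
      y ∈ D (f x0))
    (hE3zero : (0 : Y) ∈ D (f x0))
    (hE3add : ∀ a ∈ D (f x0), ∀ b ∈ D (f x0), a + b ∈ D (f x0))
    (hE3cone : ∀ a ∈ D (f x0), ∀ t : ℝ, 0 ≤ t → a + t • k ∈ D (f x0))
    (hE3pointed : D (f x0) ∩ {z : Y | ∃ t : ℝ, 0 ≤ t ∧ z = -(t • k)} = {0})
    -- f is (Θ,k)-lower semicontinuous: level sets are forward-sequentially closed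
    (hlsc : ∀ x ∈ W x0, ∀ t : ℝ, ∀ us : ℕ → X,
      (∀ n : ℕ, f x + t • k - f (us n) ∈ D (f x0)) →
      ∀ ustar : X, Tendsto (fun n : ℕ => q (us n) ustar) atTop (𝓝 0) →
      f x + t • k - f ustar ∈ D (f x0)) :
    ∀ zs : ℕ → X, (∀ n : ℕ, zs n ∈ W x0) →
      (∀ n : ℕ, zs (n + 1) ∈ W (zs n)) →
      (Summable fun n : ℕ => q (zs n) (zs (n + 1))) →
      ∃ zstar : X, ∀ n : ℕ, zstar ∈ W (zs n) := by
  intro zs hz0 hstep hsum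
  obtain ⟨z, hz⟩ := hcomplete zs
    (forward_cauchy_of_summable q hq_nonneg hq_refl hq_tri zs hsum)
  have hmono : ∀ (a : Y) (s t : ℝ), t ≤ s → a - s • k ∈ D (f x0) →
      a - t • k ∈ D (f x0) := by
    intro a s t hts ha
    have h := hE3cone _ ha (s - t) (sub_nonneg.2 hts)
    rwa [show a - s • k + (s - t) • k = a - t • k by module] at h
  have hiter : ∀ n m : ℕ,
      f (zs n) - f (zs (n + m)) - (√ε * q (zs n) (zs (n + m))) • k ∈ D (f x0) := by
    intro n m
    induction m with
    | zero => simpa [hq_refl] using hE3zero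
    | succ m ih =>
      have h := hstep (n + m)
      rw [hW, Set.mem_ofPred_eq] at h
      have hadd := hE3add _ ih _ h
      refine hmono _
        (√ε * (q (zs n) (zs (n + m)) + q (zs (n + m)) (zs (n + m + 1)))) _
        (mul_le_mul_of_nonneg_left (hq_tri _ _ _) (Real.sqrt_nonneg ε)) ?_
      convert hadd using 1
      rw [← add_assoc]
      module
  refine ⟨z, fun n => ?_⟩
  rw [hW, Set.mem_ofPred_eq]
  refine hE3vcl _ fun l hl => ⟨l, ⟨hl.le, le_rfl⟩, ?_⟩
  have hsmall : Tendsto (fun j : ℕ => √ε * q (zs j) z) atTop (𝓝 0) := by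
    simpa using hz.const_mul (√ε)
  obtain ⟨N, hN⟩ := eventually_atTop.1 (hsmall.eventually_lt_const hl)
  have hlim := hlsc (zs n) (hz0 n) (l - √ε * q (zs n) z) (fun m => zs (n + (m + N))) ?_ z ?_
  · convert hlim using 1
    module
  · intro m
    have h := hmono _ _ (√ε * q (zs n) z - l) ?_ (hiter n (m + N))
    · convert h using 1
      module
    · have h1 := hN (n + (m + N)) (by omega)
      have h2 := mul_le_mul_of_nonneg_left (hq_tri (zs n) (zs (n + (m + N))) z)
        (Real.sqrt_nonneg ε)
      rw [mul_add] at h2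
      linarith
  · exact hz.comp (tendsto_atTop_mono (fun m => by omega : ∀ m, m ≤ n + (m + N)) tendsto_id)
end

section
/- Under hypotheses (F1), (F2), (F3-a), (F3-b), (F3-c), (F3-d), there exists x⋆ ∈ W(x₀) such that q(x⋆,u) = 0 for every u ∈ W(x⋆). -/
/-!
Write `s = √ε`, `Θ = D (f x₀)` and `φ x = inf {t | t • k - (f x - f x₀) ∈ Θ}`, a real number bounded
below by `τ` on `W x₀`. Additivity of `Θ` makes `φ` decrease by at least `r` whenever
`f x - r • k - f d ∈ D (f d)` and `x, d ∈ W x₀` (`gerstewitz_real_decrease`).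

The point requiring care is transitivity of `W`: if `u ∈ W x` and `d ∈ W u`, one obtains `d ∈ W x`
only when `d ∈ W x₀`, since (F3-b) controls `D (f d)` only there. No such condition is needed
on the intermediate point `u`. So the usual sequence is built inside `W x₀`, with `x (n + 1)`
almost minimizing `φ` over `W (x n) ∩ W x₀`. The total length of the sequence is finite because `φ`
is bounded below, and a limit point `x⋆` given by (F2) minimizes `φ` over `W x⋆ ∩ W x₀`.

A point `u ∈ W x⋆` may lie outside `W x₀`. However, (F2) applied to `x₀, x⋆, u, u, u, …` provides
`d ∈ W x₀ ∩ W u`; passing from `x⋆` to `d` through `u` lowers `φ` by at least `s * q x⋆ u`, so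
minimality forces `q x⋆ u = 0`.
-/

open Filter Topology Pointwise

/-- With `z = f x - f x₀` and `z' = f d - f x₀`, this bounds `φ d` by `φ x - r`: adding
`z - r • k - z' ∈ Θ` turns `t • k - z ∈ Θ` into `(t - r) • k - z' ∈ Θ`. The two set conditions
ensure that the real infima are genuine. -/
lemma gerstewitz_real_decrease {Y : Type*} [AddCommGroup Y] [Module ℝ Y] {Θ : Set Y} {k : Y}
    (hadd : ∀ a ∈ Θ, ∀ b ∈ Θ, a + b ∈ Θ) {z z' : Y} {r : ℝ} (hr : z - r • k - z' ∈ Θ)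
    (hne : {t : ℝ | t • k - z ∈ Θ}.Nonempty) (hbdd : BddBelow {t : ℝ | t • k - z' ∈ Θ}) :
    sInf {t : ℝ | t • k - z' ∈ Θ} ≤ sInf {t : ℝ | t • k - z ∈ Θ} - r := by
  rw [le_sub_iff_add_le]
  refine le_csInf hne fun t ht => ?_
  rw [← le_sub_iff_add_le]
  refine csInf_le hbdd ?_
  have h := hadd _ ht _ hr
  have e : (t - r) • k - z' = t • k - z + (z - r • k - z') := by module
  rwa [Set.mem_ofPred_eq, e]

/-- Abstract Ekeland-type selection: a transitive, reflexive relation `V` (membership `u ∈ V x`),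
along which `φ` drops by at least `c * q`, has a point minimizing `φ` over its successors, provided
`φ` is bounded below and the terms of each `V`-chain of finite total `q`-length starting at `p₀`
have a common successor. -/
lemma exists_minimal_successor {P : Type*} (V : P → Set P) (q : P → P → ℝ) (φ : P → ℝ)
    {c τ : ℝ} (hc : 0 < c) (p₀ : P) (hq : ∀ x y, 0 ≤ q x y) (hφ : ∀ x, τ ≤ φ x)
    (hrefl : ∀ x, x ∈ V x) (htrans : ∀ x, ∀ y ∈ V x, ∀ z ∈ V y, z ∈ V x)
    (hdec : ∀ x, ∀ y ∈ V x, φ y ≤ φ x - c * q x y)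
    (hlim : ∀ xs : ℕ → P, xs 0 = p₀ → (∀ n, xs (n + 1) ∈ V (xs n)) →
      (Summable fun n => q (xs n) (xs (n + 1))) → ∃ x, ∀ n, x ∈ V (xs n)) :
    ∃ x, ∀ d ∈ V x, φ x ≤ φ d := by
  have step : ∀ (n : ℕ) (x : P), ∃ y ∈ V x, ∀ d ∈ V x, φ y ≤ φ d + 1 / ((n : ℝ) + 1) := by
    intro n x
    obtain ⟨_, ⟨y, hy, rfl⟩, hlt⟩ := Real.lt_sInf_add_pos (s := φ '' V x)
      ⟨_, x, hrefl x, rfl⟩ (Nat.one_div_pos_of_nat (α := ℝ) (n := n))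
    refine ⟨y, hy, fun d hd => hlt.le.trans ?_⟩
    gcongr
    exact csInf_le ⟨τ, by rintro _ ⟨w, -, rfl⟩; exact hφ w⟩ ⟨d, hd, rfl⟩
  choose g hgV hg using step
  let xs : ℕ → P := fun n => Nat.rec p₀ (fun n x => g n x) n
  have hxs : ∀ n, xs (n + 1) ∈ V (xs n) := fun n => hgV n (xs n)
  have hsum : ∀ n, c * ∑ i ∈ Finset.range n, q (xs i) (xs (i + 1)) ≤ φ (xs 0) - φ (xs n) := by
    intro n
    induction n with
    | zero => simp
    | succ n ih =>
      rw [Finset.sum_range_succ, mul_add]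
      linarith [hdec _ _ (hxs n)]
  obtain ⟨x, hx⟩ := hlim xs rfl hxs <|
    summable_of_sum_range_le (c := (φ (xs 0) - τ) / c) (fun n => hq _ _) fun n => by
      rw [le_div_iff₀' hc]
      linarith [hsum n, hφ (xs n)]
  refine ⟨x, fun d hd => ?_⟩
  refine ge_of_tendsto' (x := atTop) (f := fun n : ℕ => φ d + 1 / ((n : ℝ) + 1)) ?_ fun n => ?_
  · simpa using tendsto_one_div_add_atTop_nhds_zero_nat.const_add (φ d)
  · have h1 : φ (xs (n + 1)) ≤ φ d + 1 / ((n : ℝ) + 1) := hg n (xs n) d (htrans _ _ (hx n) _ hd)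
    have h2 := hdec _ _ (hx (n + 1))
    have h3 := mul_nonneg hc.le (hq (xs (n + 1)) x)
    linarith

/-- variational principle for nondominated solutions under variable
domination (Theorem `thm:EVP-dominated`, main conclusion): under (F1)–(F3) there
exists `x⋆ ∈ W x₀` with `q x⋆ u = 0` for every `u ∈ W x⋆`.  Here `Θ := D (f x₀)`
and `W x := {u | f x − √ε·q(x,u)•k − f u ∈ D (f u)}`. -/
theorem EVP_nondominated_variable_domination
    {X Y : Type*} [Nonempty X] [AddCommGroup Y] [Module ℝ Y]
    (q : X → X → ℝ)
    (hq_nonneg : ∀ x x' : X, 0 ≤ q x x')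
    (hq_refl : ∀ x : X, q x x = 0)
    (hq_tri : ∀ x x' x'' : X, q x x'' ≤ q x x' + q x' x'')
    (k : Y) (hk : k ≠ 0)
    (D : Y → Set Y) (hD0 : ∀ y : Y, (0 : Y) ∈ D y)
    (f : X → Y) (x0 : X) (ε : ℝ) (hε : 0 < ε)
    (W : X → Set X)
    (hW : ∀ x : X, W x =
      {u : X | f x - (Real.sqrt ε * q x u) • k - f u ∈ D (f u)})
    -- (F1) boundedness
    (hF1 : ∃ τ : ℝ, ∀ x ∈ W x0,
      (τ : EReal) ≤ gerstewitz (D (f x0)) k (f x - f x0))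
    -- (F2) limiting monotonicity
    (hF2 : ∀ xs : ℕ → X, (∀ n : ℕ, xs (n + 1) ∈ W (xs n)) →
      (Summable fun n : ℕ => q (xs n) (xs (n + 1))) →
      ∃ xstar : X, ∀ n : ℕ, xstar ∈ W (xs n))
    -- (F3-a) scalarization conditions for Θ := D (f x₀)
    (hF3a_vcl : ∀ y : Y,
      (∀ l : ℝ, 0 < l → ∃ t ∈ Set.Icc (0 : ℝ) l, y + t • k ∈ D (f x0)) →
      y ∈ D (f x0))
    (hF3a_add : ∀ a ∈ D (f x0), ∀ b ∈ D (f x0), a + b ∈ D (f x0))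
    (hF3a_cone : ∀ a ∈ D (f x0), ∀ t : ℝ, 0 ≤ t → a + t • k ∈ D (f x0))
    (hF3a_pointed : D (f x0) ∩ {z : Y | ∃ t : ℝ, 0 ≤ t ∧ z = -(t • k)} = {0})
    -- (F3-b)
    (hF3b : ∀ x ∈ W x0, ∀ a ∈ D (f x), ∀ t : ℝ, 0 ≤ t → a + t • k ∈ D (f x))
    -- (F3-c)
    (hF3c : ∀ u w : X, f u - f w ∈ D (f w) → D (f w) + D (f u) ⊆ D (f w))
    -- (F3-d)
    (hF3d : ∀ x ∈ W x0, D (f x) ⊆ D (f x0)) :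
    ∃ xstar ∈ W x0, ∀ u ∈ W xstar, q xstar u = 0 := by
  have hs : 0 < √ε := Real.sqrt_pos.2 hε
  have hsq : ∀ x y, 0 ≤ √ε * q x y := fun x y => mul_nonneg hs.le (hq_nonneg x y)
  have mem : ∀ x u, u ∈ W x ↔ f x - (√ε * q x u) • k - f u ∈ D (f u) := fun x u => by
    rw [hW]; rfl
  have hself : ∀ x, x ∈ W x := fun x => by simp [mem, hq_refl, hD0]
  -- Composing two steps: only the endpoint `d` has to lie in `W x0`.
  have comp : ∀ x, ∀ u ∈ W x, ∀ d ∈ W u, d ∈ W x0 →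
      f x - (√ε * (q x u + q u d)) • k - f d ∈ D (f d) := by
    intro x u hu d hd hd0
    rw [mem] at hu hd
    have h1 := hF3b d hd0 _ hd _ (hsq u d)
    have e1 : f u - (√ε * q u d) • k - f d + (√ε * q u d) • k = f u - f d := by module
    rw [e1] at h1
    have h2 := hF3c u d h1 (Set.add_mem_add hd hu)
    convert h2 using 1
    module
  have trans : ∀ x, ∀ u ∈ W x, ∀ d ∈ W u, d ∈ W x0 → d ∈ W x := by
    intro x u hu d hd hd0
    rw [mem]
    have h := hF3b d hd0 _ (comp x u hu d hd hd0) (√ε * (q x u + q u d - q x d))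
      (mul_nonneg hs.le (sub_nonneg.2 (hq_tri x u d)))
    convert h using 1
    module
  obtain ⟨τ, hτ⟩ := hF1
  let S : X → Set ℝ := fun x => {t : ℝ | t • k - (f x - f x0) ∈ D (f x0)}
  have hSτ : ∀ x ∈ W x0, ∀ t ∈ S x, τ ≤ t := fun x hx t ht =>
    EReal.coe_le_coe_iff.1 ((hτ x hx).trans (sInf_le ⟨t, ht, rfl⟩))
  have hSne : ∀ x ∈ W x0, (S x).Nonempty := by
    intro x hx
    refine ⟨-(√ε * q x0 x), ?_⟩
    have h := hF3d x hx ((mem _ _).1 hx)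
    have e : (-(√ε * q x0 x)) • k - (f x - f x0) = f x0 - (√ε * q x0 x) • k - f x := by module
    rwa [Set.mem_ofPred_eq, e]
  have dec : ∀ x ∈ W x0, ∀ d ∈ W x0, ∀ r : ℝ, f x - r • k - f d ∈ D (f d) →
      sInf (S d) ≤ sInf (S x) - r := by
    intro x hx d hd r hr
    refine gerstewitz_real_decrease hF3a_add ?_ (hSne x hx) ⟨τ, hSτ d hd⟩
    have e : f x - f x0 - r • k - (f d - f x0) = f x - r • k - f d := by module
    rw [e]
    exact hF3d d hd hr
  obtain ⟨⟨x, hx⟩, hmin⟩ := exists_minimal_successor (P := W x0) (c := √ε) (τ := τ)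
    (fun x => {y | y.1 ∈ W x.1}) (fun x y => q x y) (fun x => sInf (S x)) hs ⟨x0, hself x0⟩
    (fun _ _ => hq_nonneg _ _) (fun x => le_csInf (hSne x x.2) (hSτ x x.2))
    (fun x => hself x) (fun x y hy z hz => trans x y hy z hz z.2)
    (fun x y hy => dec x x.2 y y.2 _ ((mem _ _).1 hy))
    (fun xs h0 hxs hsum => by
      obtain ⟨y, hy⟩ := hF2 (fun n => xs n) hxs hsum
      exact ⟨⟨y, by simpa [h0] using hy 0⟩, hy⟩)
  refine ⟨x, hx, fun u hu => ?_⟩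
  -- The point `u` may leave `W x0`; the sequence `x0, x, u, u, …` leads back into it.
  obtain ⟨d, hd⟩ := hF2 (fun n => match n with | 0 => x0 | 1 => x | _ + 2 => u)
    (fun n => match n with | 0 => hx | 1 => hu | _ + 2 => hself u)
    ((summable_nat_add_iff 2).1 (by simp [hq_refl]))
  have hd0 : d ∈ W x0 := hd 0
  have hdx : d ∈ W x := hd 1
  have hdu : d ∈ W u := hd 2
  have h1 := dec x hx d hd0 _ (comp x u hu d hdu hd0)
  have h2 : sInf (S x) ≤ sInf (S d) := hmin ⟨d, hd0⟩ hdx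
  have h3 : √ε * q x u ≤ 0 := by
    have := hsq u d
    rw [mul_add] at h1
    linarith
  exact le_antisymm (nonpos_of_mul_nonpos_right h3 hs) (hq_nonneg x u)
end

section
/- Under hypotheses (F1), (F2), (F3-a), (F3-b), (F3-c), (F3-d), if additionally forward limits in (X,q) are unique (if q(xₙ,a) → 0 and q(xₙ,b) → 0 then a = b) and x₀ is an εk-nondominated solution of f with respect to D, i.e., f(x₀) − ε•k ∉ f(x) + (D(f(x)) ∖ {0}) for all x ∈ X, then there exists x⋆ ∈ X such that: (i) f(x₀) − √ε·q(x₀,x⋆)•k − f(x⋆) ∈ D(f(x⋆)); (ii) for every x ∈ X with x ≠ x⋆, f(x⋆) − √ε·q(x⋆,x)•k − f(x) ∉ D(f(x)); (iii) q(x₀,x⋆) ≤ √ε. -/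
/-!
The proof is a minimality argument for the relation `R a b : b ∈ W a ∧ b ∈ W x0`. Restricting to
`W x0` matters: cone-stability of `D (f b)` is only available for `b ∈ W x0`, and it is what makes
`R` transitive.

The Gerstewitz function `y ↦ φ_{Θ,k}(y)` turns `R a b` into the real inequality
`g b + √ε * q a b ≤ g a` with `g x = φ_{Θ,k}(f x - f x0)` finite and bounded below on `W x0`. Hence
`exists_minimal_of_decrease`, a Dancs-Hegedűs-Medvegyev type argument, provides `y ∈ W x0` with
`W y ∩ W x0 ⊆ {y}`: an approximately `g`-minimizing `R`-chain has a common successor, and by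
uniqueness of forward limits this successor has no successor but itself.

A point `v ∈ W y`, which need not lie in `W x0`, is handled by applying (F2) to the sequence
`x0, y, v, v, v, …`. This gives a point of `W x0 ∩ W y ∩ W v`, which must be `y`. So `y` and `v`
dominate each other, which puts `-(√ε * (q y v + q v y)) • k` in `Θ`; since `Θ` is pointed,
`q y v = 0`, and uniqueness of limits gives `v = y`.

If `q x0 y > √ε`, then `f x0 - ε • k - f y ∈ D (f y)`, so it is `0` by nondomination, and (i) puts
a negative multiple of `k` in `Θ`, contradicting pointedness again.
-/

open Filter Topology Pointwise

/-- An approximately `g`-minimizing chain of a relation `R` along which `g` decreases by at least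
`s * q` leads to a point whose only `R`-successor can be itself. -/
lemma exists_minimal_of_decrease {X : Type*} (q : X → X → ℝ) (hq : ∀ x y, 0 ≤ q x y)
    (R : X → X → Prop) (x0 : X) (g : X → ℝ) (s τ : ℝ) (hs : 0 < s)
    (h0 : R x0 x0) (hrefl : ∀ a, R x0 a → R a a)
    (htrans : ∀ a b c, R a b → R b c → R a c)
    (hτ : ∀ a, R x0 a → τ ≤ g a)
    (hg : ∀ a b, R x0 a → R a b → g b + s * q a b ≤ g a)
    (hlim : ∀ xs : ℕ → X, xs 0 = x0 → (∀ n, R (xs n) (xs (n + 1))) →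
      (Summable fun n => q (xs n) (xs (n + 1))) → ∃ y, ∀ n, R (xs n) y)
    (huniq : ∀ (xs : ℕ → X) (a b : X),
      Tendsto (fun n => q (xs n) a) atTop (𝓝 0) →
      Tendsto (fun n => q (xs n) b) atTop (𝓝 0) → a = b) :
    ∃ y, R x0 y ∧ ∀ z, R y z → z = y := by
  have step : ∀ (n : ℕ) (a : {a // R x0 a}), ∃ b : {a // R x0 a},
      R a b ∧ ∀ z, R a z → g b ≤ g z + (1 / 2 : ℝ) ^ n := by
    intro n a
    have hne : (g '' {z | R a z}).Nonempty := ⟨_, a, hrefl a a.2, rfl⟩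
    have hbdd : BddBelow (g '' {z | R a z}) := by
      refine ⟨τ, ?_⟩
      rintro _ ⟨z, hz, rfl⟩
      exact hτ z (htrans _ _ _ a.2 hz)
    have hlt : sInf (g '' {z | R a z}) < sInf (g '' {z | R a z}) + (1 / 2 : ℝ) ^ n := by
      have : (0 : ℝ) < (1 / 2 : ℝ) ^ n := by positivity
      linarith
    obtain ⟨_, ⟨b, hb, rfl⟩, hb'⟩ := exists_lt_of_csInf_lt hne hlt
    refine ⟨⟨b, htrans _ _ _ a.2 hb⟩, hb, fun z hz => ?_⟩
    have := csInf_le hbdd (Set.mem_image_of_mem g hz)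
    simp only
    linarith
  choose F hF1 hF2 using step
  let ys : ℕ → {a // R x0 a} := fun n => Nat.rec ⟨x0, h0⟩ (fun n a => F n a) n
  let xs : ℕ → X := fun n => (ys n).1
  have hx : ∀ n, R x0 (xs n) := fun n => (ys n).2
  have hR : ∀ n : ℕ, R (xs n) (xs (n + 1)) := fun n => hF1 n (ys n)
  have hmin : ∀ (n : ℕ) (z : X), R (xs n) z → g (xs (n + 1)) ≤ g z + (1 / 2 : ℝ) ^ n :=
    fun n z => hF2 n (ys n) z
  have hsum : ∀ n : ℕ, g (xs n) + s * ∑ i ∈ Finset.range n, q (xs i) (xs (i + 1)) ≤ g x0 := by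
    intro n
    induction n with
    | zero => simp [xs, ys]
    | succ n ih =>
      rw [Finset.sum_range_succ]
      have := hg _ _ (hx n) (hR n)
      linarith
  have hsummable : Summable fun n : ℕ => q (xs n) (xs (n + 1)) := by
    refine summable_of_sum_range_le (c := (g x0 - τ) / s) (fun n => hq _ _) fun n => ?_
    rw [le_div_iff₀ hs]
    have := hsum n
    have := hτ _ (hx n)
    linarith
  obtain ⟨y, hy⟩ := hlim xs rfl hR hsummable
  have htend : ∀ z, (∀ n : ℕ, R (xs n) z) →
      Tendsto (fun n : ℕ => q (xs (n + 1)) z) atTop (𝓝 0) := by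
    intro z hz
    have hpow : Tendsto (fun n : ℕ => (1 / 2 : ℝ) ^ n / s) atTop (𝓝 0) := by
      have := (tendsto_pow_atTop_nhds_zero_of_lt_one (r := (1 / 2 : ℝ))
        (by norm_num) (by norm_num)).div_const s
      simpa using this
    refine squeeze_zero (fun n => hq _ _) (fun n => ?_) hpow
    rw [le_div_iff₀ hs]
    have := hg _ _ (hx (n + 1)) (hz (n + 1))
    have := hmin n z (hz n)
    linarith
  refine ⟨y, hy 0, fun z hz => ?_⟩
  exact huniq (fun n => xs (n + 1)) z y
    (htend z fun n => htrans _ _ _ (hy n) hz) (htend y hy)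

/-- variational principle for nondominated solutions under variable
domination (Theorem `thm:EVP-dominated`, full version): under (F1)–(F3),
uniqueness of forward limits, and `x₀` being an `εk`-nondominated solution of `f`
w.r.t. `D`, there exists `x⋆` with (i), (ii), and (iii) `q x₀ x⋆ ≤ √ε`.
Here `Θ := D (f x₀)` and `W x := {u | f x − √ε·q(x,u)•k − f u ∈ D (f u)}`. -/
theorem EVP_nondominated_variable_domination_full
    {X Y : Type*} [Nonempty X] [AddCommGroup Y] [Module ℝ Y]
    (q : X → X → ℝ)
    (hq_nonneg : ∀ x x' : X, 0 ≤ q x x')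
    (hq_refl : ∀ x : X, q x x = 0)
    (hq_tri : ∀ x x' x'' : X, q x x'' ≤ q x x' + q x' x'')
    (k : Y) (hk : k ≠ 0)
    (D : Y → Set Y) (hD0 : ∀ y : Y, (0 : Y) ∈ D y)
    (f : X → Y) (x0 : X) (ε : ℝ) (hε : 0 < ε)
    (W : X → Set X)
    (hW : ∀ x : X, W x =
      {u : X | f x - (Real.sqrt ε * q x u) • k - f u ∈ D (f u)})
    -- (F1) boundedness
    (hF1 : ∃ τ : ℝ, ∀ x ∈ W x0,
      (τ : EReal) ≤ gerstewitz (D (f x0)) k (f x - f x0))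
    -- (F2) limiting monotonicity
    (hF2 : ∀ xs : ℕ → X, (∀ n : ℕ, xs (n + 1) ∈ W (xs n)) →
      (Summable fun n : ℕ => q (xs n) (xs (n + 1))) →
      ∃ xstar : X, ∀ n : ℕ, xstar ∈ W (xs n))
    -- (F3-a) scalarization conditions for Θ := D (f x₀)
    (hF3a_vcl : ∀ y : Y,
      (∀ l : ℝ, 0 < l → ∃ t ∈ Set.Icc (0 : ℝ) l, y + t • k ∈ D (f x0)) →
      y ∈ D (f x0))
    (hF3a_add : ∀ a ∈ D (f x0), ∀ b ∈ D (f x0), a + b ∈ D (f x0))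
    (hF3a_cone : ∀ a ∈ D (f x0), ∀ t : ℝ, 0 ≤ t → a + t • k ∈ D (f x0))
    (hF3a_pointed : D (f x0) ∩ {z : Y | ∃ t : ℝ, 0 ≤ t ∧ z = -(t • k)} = {0})
    -- (F3-b)
    (hF3b : ∀ x ∈ W x0, ∀ a ∈ D (f x), ∀ t : ℝ, 0 ≤ t → a + t • k ∈ D (f x))
    -- (F3-c)
    (hF3c : ∀ u w : X, f u - f w ∈ D (f w) → D (f w) + D (f u) ⊆ D (f w))
    -- (F3-d)
    (hF3d : ∀ x ∈ W x0, D (f x) ⊆ D (f x0))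
    -- (F4) forward limits are unique
    (hF4 : ∀ (xs : ℕ → X) (a b : X),
      Tendsto (fun n : ℕ => q (xs n) a) atTop (𝓝 0) →
      Tendsto (fun n : ℕ => q (xs n) b) atTop (𝓝 0) → a = b)
    -- x₀ is an εk-nondominated solution of f with respect to D
    (hx0 : ∀ x : X, f x0 - ε • k - f x ∉ D (f x) \ {0}) :
    ∃ xstar : X,
      f x0 - (Real.sqrt ε * q x0 xstar) • k - f xstar ∈ D (f xstar) ∧
      (∀ x : X, x ≠ xstar →
        f xstar - (Real.sqrt ε * q xstar x) • k - f x ∉ D (f x)) ∧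
      q x0 xstar ≤ Real.sqrt ε := by
  obtain ⟨τ, hτ⟩ := hF1
  have hs : 0 < Real.sqrt ε := Real.sqrt_pos.2 hε
  have hss : Real.sqrt ε * Real.sqrt ε = ε := Real.mul_self_sqrt hε.le
  set s := Real.sqrt ε with hs_def
  have memW : ∀ x u, u ∈ W x ↔ f x - (s * q x u) • k - f u ∈ D (f u) := by
    intro x u
    rw [hW x]
    rfl
  have hWrefl : ∀ x, x ∈ W x := by
    intro x
    rw [memW, hq_refl]
    simpa using hD0 (f x)
  have hWdom : ∀ x, ∀ u ∈ W x, u ∈ W x0 → f x - f u ∈ D (f u) := by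
    intro x u hu hu0
    have := hF3b u hu0 _ ((memW _ _).1 hu) (s * q x u) (mul_nonneg hs.le (hq_nonneg _ _))
    convert this using 1
    abel
  have hWtrans : ∀ x, ∀ u ∈ W x, ∀ v ∈ W u, v ∈ W x0 → v ∈ W x := by
    intro x u hu v hv hv0
    have hsub := hF3c u v (hWdom u v hv hv0)
    have hadd := hsub (Set.add_mem_add ((memW _ _).1 hv) ((memW _ _).1 hu))
    have hnn : 0 ≤ s * (q x u + q u v - q x v) :=
      mul_nonneg hs.le (by linarith [hq_tri x u v])
    rw [memW]
    convert hF3b v hv0 _ hadd _ hnn using 1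
    module
  have hpt : ∀ t : ℝ, 0 ≤ t → -(t • k) ∈ D (f x0) → t = 0 := by
    intro t ht h
    have : -(t • k) ∈ ({0} : Set Y) := hF3a_pointed ▸ ⟨h, t, ht, rfl⟩
    simpa [hk] using this
  -- The Gerstewitz function is finite on `W x0`, so it may be computed as a real infimum there.
  let T : X → Set ℝ := fun x => {t | t • k - (f x - f x0) ∈ D (f x0)}
  have hTlb : ∀ x ∈ W x0, ∀ t ∈ T x, τ ≤ t := by
    intro x hx t ht
    have h := (hτ x hx).trans (sInf_le (Set.mem_image_of_mem _ ht))
    exact EReal.coe_le_coe_iff.1 h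
  have hTne : ∀ x ∈ W x0, (T x).Nonempty := by
    intro x hx
    refine ⟨-(s * q x0 x), ?_⟩
    have := hF3d x hx ((memW _ _).1 hx)
    change _ ∈ D (f x0)
    convert this using 1
    module
  have huniq0 : ∀ a b, q a b = 0 → b = a := by
    intro a b hab
    refine hF4 (fun _ => a) b a ?_ ?_
    · simp [hab]
    · simp [hq_refl]
  obtain ⟨y, ⟨-, hy0⟩, hymin⟩ := exists_minimal_of_decrease q hq_nonneg
    (fun a b => b ∈ W a ∧ b ∈ W x0) x0 (fun x => sInf (T x)) s τ hs
    ⟨hWrefl _, hWrefl _⟩ (fun a ha => ⟨hWrefl a, ha.2⟩)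
    (fun a b c hab hbc => ⟨hWtrans a b hab.1 c hbc.1 hbc.2, hbc.2⟩)
    (fun a ha => le_csInf (hTne a ha.2) (hTlb a ha.2))
    (by
      intro a b ha hab
      refine le_csInf (hTne a ha.2) fun t ht => ?_
      have hmem : t - s * q a b ∈ T b := by
        have := hF3a_add _ ht _ (hF3d b hab.2 ((memW _ _).1 hab.1))
        change _ ∈ D (f x0)
        convert this using 1
        module
      have := csInf_le ⟨τ, hTlb b hab.2⟩ hmem
      linarith)
    (by
      intro xs h0 hxs hsum
      obtain ⟨y, hy⟩ := hF2 xs (fun n => (hxs n).1) hsum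
      exact ⟨y, fun n => ⟨hy n, h0 ▸ hy 0⟩⟩)
    hF4
  refine ⟨y, (memW _ _).1 hy0, ?_, ?_⟩
  · intro v hvy hv
    rw [← memW] at hv
    -- The sequence `x0, y, v, v, v, …`; (F2) yields a point of `W x0 ∩ W y ∩ W v`.
    obtain ⟨w, hw⟩ := hF2 (fun n => match n with | 0 => x0 | 1 => y | _ + 2 => v)
      (by
        rintro (_ | _ | n)
        · exact hy0
        · exact hv
        · exact hWrefl v)
      (by
        rw [← summable_nat_add_iff 2]
        simp [hq_refl])
    have hw0 : w ∈ W x0 := hw 0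
    obtain rfl : w = y := hymin w ⟨hw 1, hw0⟩
    have hwv : w ∈ W v := hw 2
    have hadd := hF3c v w (hWdom v w hwv hw0)
      (Set.add_mem_add ((memW _ _).1 hwv) ((memW _ _).1 hv))
    have h := hpt (s * (q w v + q v w))
      (mul_nonneg hs.le (add_nonneg (hq_nonneg _ _) (hq_nonneg _ _)))
      (by
        convert hF3d w hw0 hadd using 1
        module)
    have hq0 : q w v + q v w = 0 := by simpa [hs.ne'] using h
    exact hvy (huniq0 w v (by linarith [hq_nonneg w v, hq_nonneg v w]))
  · by_contra! hlt
    have hpos : 0 < s * q x0 y - ε := by nlinarith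
    have hy1 := (memW _ _).1 hy0
    have hmem : f x0 - ε • k - f y ∈ D (f y) := by
      convert hF3b y hy0 _ hy1 _ hpos.le using 1
      module
    -- Nondomination forces this element of `D (f y)` to vanish.
    have hzero : f x0 - ε • k - f y = 0 := by
      by_contra hne
      exact hx0 y ⟨hmem, hne⟩
    have := hpt _ hpos.le (by
      convert hF3d y hy0 hy1 using 1
      calc -((s * q x0 y - ε) • k)
          = -((s * q x0 y - ε) • k) + (f x0 - ε • k - f y) := by rw [hzero, add_zero]
        _ = _ := by module)
    exact hpos.ne' this
end

section
/- Let X be a nonempty set with a quasimetric q, let Y be a real normed space, D : Y → Set Y with 0 ∈ D(y) for every y ∈ Y, f : X → Y, x₀ ∈ X, ε > 0, and set Θ := D(f(x₀)) and W(x₀) := {u ∈ X : f(x₀) − √ε·q(x₀,u)•k − f(u) ∈ D(f(u))}. Assume Θ is topologically closed and convex with 0 ∈ Θ, Θ + Θ ⊆ Θ, Θ + cone(k) ⊆ Θ, and k ∈ Θ ∖ (−Θ), and that f is quasibounded over W(x₀): there exists a bounded set M ⊆ Y with f(x) − f(x₀) ∈ M + Θ for all x ∈ W(x₀). Then ψ(x)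 := φ_{Θ,k}(f(x) − f(x₀)) is bounded from below on W(x₀): there exists τ ∈ ℝ with ψ(x) ≥ τ for all x ∈ W(x₀). -/
/-!
If `t • k - (f x - f x₀) ∈ Θ` and `f x - f x₀ = m + θ` with `m ∈ M`, `θ ∈ Θ`, then adding `θ` gives
`t • k - m ∈ Θ`. For `t = -s` with `s ≥ 1`, convexity and `0 ∈ Θ` allow dividing by `s`:
`-k - s⁻¹ • m ∈ Θ`. Since `Θ` is closed and `-k ∉ Θ`, some ball around `-k` misses `Θ`; as `M` is
bounded, this bounds `s` uniformly in `x`, and the bound passes to the infimum over `t`.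
-/

open Pointwise

/-- sufficient conditions for the boundedness assumption (F1)
(Proposition `suffF1`): if `Θ := D (f x₀)` is a topologically closed convex set
with `0 ∈ Θ`, `Θ + Θ ⊆ Θ`, `Θ + cone(k) ⊆ Θ` and `k ∈ Θ \ (−Θ)`, and `f` is
quasibounded over `W x₀`, then `ψ(x) := φ_{Θ,k}(f x − f x₀)` is bounded from
below on `W x₀`. -/
theorem gerstewitz_bddBelow_of_quasibounded
    {X Y : Type*} [Nonempty X] [NormedAddCommGroup Y] [NormedSpace ℝ Y]
    (q : X → X → ℝ)
    (hq_nonneg : ∀ x x' : X, 0 ≤ q x x')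
    (hq_refl : ∀ x : X, q x x = 0)
    (hq_tri : ∀ x x' x'' : X, q x x'' ≤ q x x' + q x' x'')
    (k : Y) (hk : k ≠ 0)
    (D : Y → Set Y) (hD0 : ∀ y : Y, (0 : Y) ∈ D y)
    (f : X → Y) (x0 : X) (ε : ℝ) (hε : 0 < ε)
    (W0 : Set X)
    (hW0 : W0 = {u : X | f x0 - (Real.sqrt ε * q x0 u) • k - f u ∈ D (f u)})
    (hclosed : IsClosed (D (f x0)))
    (hconvex : Convex ℝ (D (f x0)))
    (hzero : (0 : Y) ∈ D (f x0))
    (hadd : ∀ a ∈ D (f x0), ∀ b ∈ D (f x0), a + b ∈ D (f x0))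
    (hcone : ∀ a ∈ D (f x0), ∀ t : ℝ, 0 ≤ t → a + t • k ∈ D (f x0))
    (hkmem : k ∈ D (f x0) \ (-(D (f x0))))
    (hqb : ∃ M : Set Y, Bornology.IsBounded M ∧
      ∀ x ∈ W0, f x - f x0 ∈ M + D (f x0)) :
    ∃ τ : ℝ, ∀ x ∈ W0, (τ : EReal) ≤ gerstewitz (D (f x0)) k (f x - f x0) := by
  obtain ⟨M, hM, hfM⟩ := hqb
  have hnk : -k ∈ (D (f x0))ᶜ := fun h => hkmem.2 (by simpa using h)
  obtain ⟨δ, hδ, hball⟩ := Metric.isOpen_iff.1 hclosed.isOpen_compl _ hnk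
  obtain ⟨R, hR, hMR⟩ := hM.exists_pos_norm_le
  refine ⟨-(R / δ + 1), fun x hx => ?_⟩
  unfold gerstewitz
  refine le_sInf ?_
  rintro _ ⟨t, ht, rfl⟩
  rw [EReal.coe_le_coe_iff]
  by_contra! hlt
  obtain ⟨m, hm, θ, hθ, hmθ⟩ := hfM x hx
  have hRδ : 0 < R / δ := div_pos hR hδ
  have hs : 0 < -t := by linarith
  have htm : t • k - m ∈ D (f x0) := by
    have h := hadd _ ht _ hθ
    rw [← hmθ] at h
    convert h using 1
    simp only
    abel
  have hscaled : (-t)⁻¹ • (t • k - m) ∈ D (f x0) :=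
    hconvex.smul_mem_of_zero_mem hzero htm
      ⟨(inv_pos.2 hs).le, inv_le_one_of_one_le₀ (by linarith)⟩
  have heq : (-t)⁻¹ • (t • k - m) - -k = -((-t)⁻¹ • m) := by
    have h1 : (-t)⁻¹ * t = -1 := by
      have : t ≠ 0 := by linarith
      field_simp
    rw [smul_sub, smul_smul, h1, neg_one_smul]
    abel
  refine hball ?_ hscaled
  rw [Metric.mem_ball, dist_eq_norm, heq, norm_neg, norm_smul, Real.norm_eq_abs,
    abs_of_pos (inv_pos.2 hs), inv_mul_lt_iff₀ hs]
  have hRlt : R < -t * δ := (div_lt_iff₀ hδ).1 (by linarith)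
  exact (hMR m hm).trans_lt hRlt
end

section
/- Let (X,q) be a forward-complete quasimetric space, Y a real vector space, k ∈ Y ∖ {0}, D : Y → Set Y with 0 ∈ D(y) for every y ∈ Y, f : X → Y, ε > 0, and W(x) := {u ∈ X : f(x) − √ε·q(x,u)•k − f(u) ∈ D(f(u))}. Assume: for every x ∈ X, D(f(x)) + cone(k) ⊆ D(f(x)) and D(f(x)) is k-vectorially closed; for all u, w ∈ X, f(u) − f(w) ∈ D(f(w)) implies D(f(w)) + D(f(u)) ⊆ D(f(w)); and f is ≤_N-decreasing lower semicontinuous: for every sequence (xₙ) forward-converging to some x⋆ with f(xₙ) ∈ f(x_{n+1}) + D(f(x_{n+1})) for all n, one has f(xₙ) ∈ f(x⋆) + D(f(x⋆)) for all n. Then W satisfies the limiting monotonicity condition: for every sequence (xₙ) with x_{n+1} ∈ W(xₙ) for all n and ∑ₙ q(xₙ,x_{n+1}) < ∞, there exists x⋆ ∈ X with x⋆ ∈ W(xₙ) for all n. -/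
open Filter Topology Pointwise

/-!
Along a `W`-chain, `D (f x) + cone(k) ⊆ D (f x)` drops the `k`-term, so `f` is decreasing, while
summability and the triangle inequality make the chain forward-Cauchy; let `xstar` be a forward
limit. Lower semicontinuity bounds every `f (xs n)` below by `f xstar`, and transitivity chains the
steps `xs n → ⋯ → xs (n + m) → xstar` into
`f (xs n) - (√ε * ∑ i < m, q (xs (n + i)) (xs (n + i + 1))) • k - f xstar ∈ D (f xstar)`.
By the triangle inequality the sum is at least `q (xs n) xstar - q (xs (n + m)) xstar`, and the
last term tends to zero in `m`, so vectorial closedness gives the claim.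
-/

/-- Triangle inequality along a finite chain. -/
lemma quasimetric_le_sum_range {X : Type*} (q : X → X → ℝ) (hq_refl : ∀ x : X, q x x = 0)
    (hq_tri : ∀ x x' x'' : X, q x x'' ≤ q x x' + q x' x'') (xs : ℕ → X) (n m : ℕ) :
    q (xs n) (xs (n + m)) ≤ ∑ i ∈ Finset.range m, q (xs (n + i)) (xs (n + i + 1)) := by
  induction m with
  | zero => simp [hq_refl]
  | succ m ih =>
    rw [Finset.sum_range_succ]
    have := hq_tri (xs n) (xs (n + m)) (xs (n + m + 1))
    rw [← add_assoc]
    linarith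

/-- sufficient conditions for the limiting monotonicity condition
in the nondomination setting (Proposition `suff-limmon`): if `(X,q)` is
forward-complete, each `D (f x)` is `k`-vectorially closed and satisfies
`D (f x) + cone(k) ⊆ D (f x)`, the transitivity condition (F3-c) holds, and `f`
is `≤_N`-decreasing lower semicontinuous, then `W` (with
`W x := {u | f x − √ε·q(x,u)•k − f u ∈ D (f u)}`) satisfies the limiting
monotonicity condition. -/
theorem limiting_monotonicity_nondomination
    {X Y : Type*} [Nonempty X] [AddCommGroup Y] [Module ℝ Y]
    (q : X → X → ℝ)
    (hq_nonneg : ∀ x x' : X, 0 ≤ q x x')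
    (hq_refl : ∀ x : X, q x x = 0)
    (hq_tri : ∀ x x' x'' : X, q x x'' ≤ q x x' + q x' x'')
    -- forward-completeness of (X,q)
    (hcomplete : ∀ xs : ℕ → X,
      (∀ δ : ℝ, 0 < δ → ∃ N : ℕ, ∀ n ≥ N, ∀ m : ℕ, q (xs n) (xs (n + m)) < δ) →
      ∃ xstar : X, Tendsto (fun n : ℕ => q (xs n) xstar) atTop (𝓝 0))
    (k : Y) (hk : k ≠ 0)
    (D : Y → Set Y) (hD0 : ∀ y : Y, (0 : Y) ∈ D y)
    (f : X → Y) (ε : ℝ) (hε : 0 < ε)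
    (W : X → Set X)
    (hW : ∀ x : X, W x =
      {u : X | f x - (Real.sqrt ε * q x u) • k - f u ∈ D (f u)})
    -- D (f x) + cone(k) ⊆ D (f x) for every x
    (hcone : ∀ x : X, ∀ a ∈ D (f x), ∀ t : ℝ, 0 ≤ t → a + t • k ∈ D (f x))
    -- D (f x) is k-vectorially closed for every x
    (hvcl : ∀ x : X, ∀ y : Y,
      (∀ l : ℝ, 0 < l → ∃ t ∈ Set.Icc (0 : ℝ) l, y + t • k ∈ D (f x)) →
      y ∈ D (f x))
    -- transitivity condition (F3-c)
    (htrans : ∀ u w : X, f u - f w ∈ D (f w) → D (f w) + D (f u) ⊆ D (f w))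
    -- f is ≤_N-decreasing lower semicontinuous
    (hlsc : ∀ xs : ℕ → X, ∀ xstar : X,
      Tendsto (fun n : ℕ => q (xs n) xstar) atTop (𝓝 0) →
      (∀ n : ℕ, f (xs n) - f (xs (n + 1)) ∈ D (f (xs (n + 1)))) →
      ∀ n : ℕ, f (xs n) - f xstar ∈ D (f xstar)) :
    ∀ xs : ℕ → X, (∀ n : ℕ, xs (n + 1) ∈ W (xs n)) →
      (Summable fun n : ℕ => q (xs n) (xs (n + 1))) →
      ∃ xstar : X, ∀ n : ℕ, xstar ∈ W (xs n) := by
  intro xs hxs hsum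
  have hstep : ∀ n, f (xs n) - (Real.sqrt ε * q (xs n) (xs (n + 1))) • k - f (xs (n + 1))
      ∈ D (f (xs (n + 1))) := by
    intro n
    have h := hxs n
    rw [hW] at h
    exact h
  have hdec : ∀ n, f (xs n) - f (xs (n + 1)) ∈ D (f (xs (n + 1))) := by
    intro n
    have h := hcone _ _ (hstep n) (Real.sqrt ε * q (xs n) (xs (n + 1)))
      (mul_nonneg (Real.sqrt_nonneg _) (hq_nonneg _ _))
    convert h using 1
    abel
  have hchain := quasimetric_le_sum_range q hq_refl hq_tri xs
  obtain ⟨xstar, hlim⟩ := hcomplete xs (by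
    intro δ hδ
    -- The increments `q (xs n) (xs (n + m))` are bounded by the tails of the series.
    have htail := tendsto_sum_nat_add fun n : ℕ => q (xs n) (xs (n + 1))
    obtain ⟨N, hN⟩ := eventually_atTop.1 (htail.eventually (gt_mem_nhds hδ))
    refine ⟨N, fun n hn m => lt_of_le_of_lt ((hchain n m).trans ?_) (hN n hn)⟩
    have hs := (summable_nat_add_iff n).2 hsum
    have := hs.sum_le_tsum (Finset.range m) (fun i _ => hq_nonneg _ _)
    simpa only [add_comm n] using this)
  have hbelow := hlsc xs xstar hlim hdec
  have hadd : ∀ u w : X, f u - f w ∈ D (f w) → ∀ a ∈ D (f w), ∀ b ∈ D (f u),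
      a + b ∈ D (f w) :=
    fun u w h a ha b hb => htrans u w h (Set.add_mem_add ha hb)
  have hacc : ∀ n m : ℕ, f (xs n)
      - (Real.sqrt ε * ∑ i ∈ Finset.range m, q (xs (n + i)) (xs (n + i + 1))) • k
      - f (xs (n + m)) ∈ D (f (xs (n + m))) := by
    intro n m
    induction m with
    | zero => simpa using hD0 (f (xs n))
    | succ m ih =>
      have h := hadd _ _ (hdec (n + m)) _ (hstep (n + m)) _ ih
      rw [Finset.sum_range_succ, ← add_assoc]
      convert h using 1
      module
  refine ⟨xstar, fun n => ?_⟩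
  rw [hW]
  refine hvcl xstar _ fun l hl => ?_
  have hlim' : Tendsto (fun m : ℕ => Real.sqrt ε * q (xs (n + m)) xstar) atTop (𝓝 0) := by
    have h := (hlim.comp (tendsto_add_atTop_nat n)).const_mul (Real.sqrt ε)
    simpa [Function.comp_def, add_comm] using h
  obtain ⟨m, hm⟩ := (hlim'.eventually (gt_mem_nhds hl)).exists
  refine ⟨l, ⟨hl.le, le_rfl⟩, ?_⟩
  have h := hadd _ _ (hbelow (n + m)) _ (hbelow (n + m)) _ (hacc n m)
  set S := ∑ i ∈ Finset.range m, q (xs (n + i)) (xs (n + i + 1))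
  have hq : q (xs n) xstar ≤ S + q (xs (n + m)) xstar :=
    (hq_tri _ (xs (n + m)) _).trans (by linarith [hchain n m])
  -- The surplus `√ε * (S - q (xs n) xstar) + l` is nonnegative by the choice of `m`, so the
  -- cone condition absorbs it.
  have h' := hcone _ _ h (Real.sqrt ε * S - Real.sqrt ε * q (xs n) xstar + l)
    (by nlinarith [mul_le_mul_of_nonneg_left hq (Real.sqrt_nonneg ε)])
  convert h' using 1
  module
end
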